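/- arXiv:2306.03720 — 2 statements merged into one kernel-verified Lean document; each statement's English description precedes it below -/
import Mathlib

section
/- Assume d ≥ 2 and 2 < p < 2_s^⋆. For a fixed ε ∈ (0,1), let g_ε be (s,γ)-admissible for some s > d/(d+1) and γ > 1. Then: (i) for every k ∈ {2,…,d−2}, there exists a nonzero u ∈ H^s_k with q_ε(u)/‖u‖_{L^p}² = R^k_ε(p); and (ii) there exists a nonzero radial u ∈ H^s_rad with q_ε(u)/‖u‖_{L^p}² = R^rad_ε(p). -/
open MeasureTheory Real Filter
open scoped ENNReal FourierTransform RealInnerProductSpace Topology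

noncomputable section

/-- Euclidean space `ℝ^d`. -/
abbrev Rd (d : ℕ) : Type := EuclideanSpace ℝ (Fin d)

/-- `U` is the (distributional, hence `L²`-) Fourier transform of `u`:
it pairs against Schwartz functions the way the Fourier transform of `u` must. -/
def IsFT {d : ℕ} (U u : Rd d → ℂ) : Prop :=
  ∀ φ : SchwartzMap (Rd d) ℂ, ∫ ξ, U ξ * φ ξ = ∫ x, u x * 𝓕 (⇑φ) x

/-- An element of `H^s(ℝ^d)`: an `L²` function `toFun` together with its Fourier
transform `ft`, satisfying the `H^s` integrability condition. -/
structure HsFn (d : ℕ) (s : ℝ) where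
  toFun : Rd d → ℂ
  ft : Rd d → ℂ
  memL2 : MemLp toFun 2 volume
  ft_memL2 : MemLp ft 2 volume
  isFT : IsFT ft toFun
  memHs : Integrable (fun ξ : Rd d => ‖ft ξ‖ ^ 2 * (1 + ‖ξ‖ ^ 2) ^ s) volume

/-- The quadratic form `q_ε(u) = ∫ |û(ξ)|² g(|ξ|) dξ` (for a fixed symbol `g`). -/
def qeps {d : ℕ} {s : ℝ} (g : ℝ → ℝ) (u : HsFn d s) : ℝ :=
  ∫ ξ : Rd d, ‖u.ft ξ‖ ^ 2 * g ‖ξ‖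

/-- The `L^p` norm (as a real number). -/
def LpN {d : ℕ} (p : ℝ) (f : Rd d → ℂ) : ℝ :=
  (eLpNorm f (ENNReal.ofReal p) volume).toReal

/-- The set of values of the Rayleigh quotient `q_ε(u)/‖u‖_p²` over nonzero
`u ∈ H^s` satisfying the symmetry constraint `P`. -/
def RayleighSet (d : ℕ) (s p : ℝ) (g : ℝ → ℝ) (P : (Rd d → ℂ) → Prop) : Set ℝ :=
  {t | ∃ u : HsFn d s, P u.toFun ∧ ¬ u.toFun =ᵐ[volume] (fun _ => (0 : ℂ)) ∧
      MemLp u.toFun (ENNReal.ofReal p) volume ∧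
      t = qeps g u / LpN p u.toFun ^ 2}

/-- The Rayleigh quotient infimum. -/
def Rayleigh (d : ℕ) (s p : ℝ) (g : ℝ → ℝ) (P : (Rd d → ℂ) → Prop) : ℝ :=
  sInf (RayleighSet d s p g P)

/-- The Rayleigh quotient infimum is attained. -/
def Attained (d : ℕ) (s p : ℝ) (g : ℝ → ℝ) (P : (Rd d → ℂ) → Prop) : Prop :=
  ∃ u : HsFn d s, P u.toFun ∧ ¬ u.toFun =ᵐ[volume] (fun _ => (0 : ℂ)) ∧
      MemLp u.toFun (ENNReal.ofReal p) volume ∧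
      qeps g u / LpN p u.toFun ^ 2 = Rayleigh d s p g P

/-- A radial function. -/
def Radial {d : ℕ} (f : Rd d → ℂ) : Prop := ∀ x y : Rd d, ‖x‖ = ‖y‖ → f x = f y

/-- The squared norm of the first block of coordinates (the first `d - k` ones),
under the identification `ℝ^d = ℝ^{d-k} × ℝ^k`. -/
def blockSq (d k : ℕ) (x : Rd d) : ℝ := ∑ i : Fin d, if (i : ℕ) < d - k then x i ^ 2 else 0

/-- A `G_k = O(d-k) × O(k)`-symmetric function: it depends only on the norms of the
two blocks of coordinates. -/
def GkSymmetric (d k : ℕ) (f : Rd d → ℂ) : Prop :=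
  ∀ x y : Rd d, blockSq d k x = blockSq d k y → ‖x‖ = ‖y‖ → f x = f y

/-- An `(s,γ)`-admissible family of symbols, with admissibility constants `c, C`. -/
def IsAdmissible (s γ c C : ℝ) (g : ℝ → ℝ → ℝ) : Prop :=
  (∀ ε ∈ Set.Ioo (0:ℝ) 1, Measurable (g ε)) ∧
  (∀ ε ∈ Set.Ioo (0:ℝ) 1, ∀ r : ℝ, 0 < g ε r) ∧
  (∀ ε ∈ Set.Ioo (0:ℝ) 1, ∀ r : ℝ, 1/2 ≤ |r - 1| →
      c * (1 + |r| ^ (2*s)) ≤ g ε r ∧ g ε r ≤ C * (1 + |r| ^ (2*s))) ∧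
  (∀ ε ∈ Set.Ioo (0:ℝ) 1, ∀ r : ℝ, |r - 1| ≤ 1/2 →
      c * (ε + |r - 1| ^ γ) ≤ g ε r ∧ g ε r ≤ C * (ε + |r - 1| ^ γ))

/-- The `G_k`-symmetric Stein–Tomas exponent `2_⋆^k`. -/
def twoStarK (d k : ℕ) : ℝ :=
  2 * ((d : ℝ) + (min k (d - k) : ℕ)) / ((d : ℝ) - 2 + (min k (d - k) : ℕ))

/-- The interpolation parameter `α_k`. -/
def alphaK (d k : ℕ) (p : ℝ) : ℝ := (1/2 - 1/p) / (1/2 - 1/twoStarK d k)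

/-- The spherical shell `A_{ε,δ}` around the unit sphere (with `I_{ε,δ}` scale `ε^{1/γ}`). -/
def Aset (d : ℕ) (γ ε δ : ℝ) : Set (Rd d) :=
  {ξ | δ * ε ^ (1/γ) ≤ |‖ξ‖ - 1| ∧ |‖ξ‖ - 1| ≤ δ⁻¹ * ε ^ (1/γ)}

/-!
On the Fourier side `u ↦ √g · û` identifies the symmetric part of `H^s`, normed by the quadratic
form, with a closed subspace of `L²`, so minimizing the Rayleigh quotient amounts to maximizing the
`L^p` norm of the corresponding synthesis operator on the unit ball. A maximizer exists as soon as
this operator maps weakly convergent sequences to strongly convergent ones. For the high frequencies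
this costs nothing: by the subcritical Sobolev inequality they contribute uniformly little. The low
frequency part of a weakly null sequence tends to zero locally uniformly, and it is uniformly small
far away because of symmetry: a distant point has many far apart images under the symmetry group,
evaluation at these images gives the same value, and the corresponding evaluation kernels are almost
orthogonal in `L²`. Hence it is uniformly small, and interpolation with the `L²` bound makes it
small in `L^p`. The condition on the dimensions of the two blocks (neither equals one) is what makes
the orbits large.
-/

section Hilbert

variable {𝕜 H K ι : Type*} [RCLike 𝕜] [NormedAddCommGroup H] [InnerProductSpace 𝕜 H]
  [NormedAddCommGroup K] [InnerProductSpace 𝕜 K]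

variable (𝕜) in
/-- The family `f` is norm bounded along `l` and converges weakly to zero along `l`. General filters
are needed because the weak topology on bounded sets is handled without metrizability. -/
structure BoundedWeaklyNull (l : Filter ι) (f : ι → H) : Prop where
  isBoundedUnder : IsBoundedUnder (· ≤ ·) l fun i ↦ ‖f i‖
  tendsto_inner : ∀ g : H, Tendsto (fun i ↦ inner 𝕜 g (f i)) l (𝓝 0)

lemma BoundedWeaklyNull.exists_bound {l : Filter ι} {f : ι → H} (hf : BoundedWeaklyNull 𝕜 l f) :
    ∃ B : ℝ, 0 < B ∧ ∀ᶠ i in l, ‖f i‖ ≤ B := by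
  obtain ⟨B, hB⟩ := hf.isBoundedUnder.eventually_le
  exact ⟨max B 1, by positivity, hB.mono fun i hi ↦ hi.trans (le_max_left B 1)⟩

lemma BoundedWeaklyNull.map [CompleteSpace H] [CompleteSpace K] {l : Filter ι} {f : ι → H}
    (hf : BoundedWeaklyNull 𝕜 l f) (T : H →L[𝕜] K) :
    BoundedWeaklyNull 𝕜 l fun i ↦ T (f i) where
  isBoundedUnder := by
    obtain ⟨B, -, hB⟩ := hf.exists_bound
    exact isBoundedUnder_of_eventually_le (hB.mono fun i hi ↦ T.le_opNorm_of_le hi)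
  tendsto_inner g := by
    simpa only [ContinuousLinearMap.adjoint_inner_left] using
      hf.tendsto_inner (ContinuousLinearMap.adjoint T g)

lemma BoundedWeaklyNull.eventually_forall_norm_inner_le {l : Filter ι} {f : ι → H}
    (hf : BoundedWeaklyNull 𝕜 l f) {C : Set H} (hC : IsCompact C) {η : ℝ} (hη : 0 < η) :
    ∀ᶠ i in l, ∀ g ∈ C, ‖inner 𝕜 g (f i)‖ ≤ η := by
  obtain ⟨B, hB, hfB⟩ := hf.exists_bound
  obtain ⟨t, -, ht, hCt⟩ := hC.finite_cover_balls (show 0 < η / 2 / B by positivity)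
  have hnet : ∀ᶠ i in l, ∀ g ∈ t, ‖inner 𝕜 g (f i)‖ ≤ η / 2 :=
    (eventually_all_finite ht).2 fun g _ ↦
      (hf.tendsto_inner g).norm.eventually_le_const (by simpa using half_pos hη)
  filter_upwards [hfB, hnet] with i hi hnet_i g hg
  obtain ⟨y, hy, hgy⟩ := Set.mem_iUnion₂.1 (hCt hg)
  have hsplit : inner 𝕜 g (f i) = inner 𝕜 (g - y) (f i) + inner 𝕜 y (f i) := by
    rw [← inner_add_left, sub_add_cancel]
  calc ‖inner 𝕜 g (f i)‖ ≤ ‖g - y‖ * ‖f i‖ + ‖inner 𝕜 y (f i)‖ := by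
        rw [hsplit]
        exact (norm_add_le _ _).trans (by gcongr; exact norm_inner_le_norm _ _)
    _ ≤ η / 2 / B * B + η / 2 := by
        gcongr
        · exact (mem_ball_iff_norm.1 hgy).le
        · exact hnet_i y hy
    _ = η := by field_simp; ring

lemma norm_sum_sq_le_of_almost_orthogonal {N : ℕ} {v : Fin N → H} {κ δ : ℝ} (hδ : 0 ≤ δ)
    (hv : ∀ i, ‖v i‖ ^ 2 ≤ κ) (hvv : Pairwise fun i j ↦ ‖inner 𝕜 (v i) (v j)‖ ≤ δ) :
    ‖∑ i, v i‖ ^ 2 ≤ N * (κ + N * δ) := by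
  have hentry (i j : Fin N) : ‖inner 𝕜 (v i) (v j)‖ ≤ (if j = i then κ else 0) + δ := by
    split_ifs with hij
    · rw [hij, inner_self_eq_norm_sq_to_K, norm_pow, RCLike.norm_ofReal, abs_norm]
      linarith [hv i]
    · simpa using hvv (Ne.symm hij)
  calc ‖∑ i, v i‖ ^ 2 = RCLike.re (∑ i, ∑ j, inner 𝕜 (v i) (v j)) := by
        rw [← inner_self_eq_norm_sq (𝕜 := 𝕜), sum_inner]
        simp_rw [inner_sum]
    _ ≤ ∑ i, ∑ j, ‖inner 𝕜 (v i) (v j)‖ :=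
        (RCLike.re_le_norm _).trans <| (norm_sum_le _ _).trans <|
          Finset.sum_le_sum fun i _ ↦ norm_sum_le _ _
    _ ≤ ∑ i : Fin N, ∑ j : Fin N, ((if j = i then κ else 0) + δ) := by gcongr; apply hentry
    _ = N * (κ + N * δ) := by simp [Finset.sum_add_distrib]; ring

-- The common value is the inner product of `f` with the average of the `v i`, which is short.
lemma card_mul_norm_sq_le_of_almost_orthogonal {N : ℕ} (hN : 0 < N) {v : Fin N → H} {κ δ : ℝ}
    (hδ : 0 ≤ δ) (hv : ∀ i, ‖v i‖ ^ 2 ≤ κ) (hvv : Pairwise fun i j ↦ ‖inner 𝕜 (v i) (v j)‖ ≤ δ)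
    {f : H} {z : 𝕜} (hz : ∀ i, inner 𝕜 (v i) f = z) :
    N * ‖z‖ ^ 2 ≤ (κ + N * δ) * ‖f‖ ^ 2 := by
  have hsum : inner 𝕜 (∑ i, v i) f = N * z := by
    simp [sum_inner, hz]
  have hN' : (0 : ℝ) < N := by exact_mod_cast hN
  refine le_of_mul_le_mul_left ?_ hN'
  calc N * (N * ‖z‖ ^ 2) = ‖inner 𝕜 (∑ i, v i) f‖ ^ 2 := by
        rw [hsum, norm_mul, RCLike.norm_natCast]; ring
    _ ≤ (‖∑ i, v i‖ * ‖f‖) ^ 2 := by gcongr; exact norm_inner_le_norm _ _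
    _ ≤ N * ((κ + N * δ) * ‖f‖ ^ 2) := by
        rw [mul_pow, ← mul_assoc]
        gcongr
        exact norm_sum_sq_le_of_almost_orthogonal hδ hv hvv

lemma continuous_of_continuous_inner {X : Type*} [TopologicalSpace X] {k : X → H}
    (hk : Continuous fun p : X × X ↦ inner 𝕜 (k p.1) (k p.2)) : Continuous k := by
  refine continuous_iff_continuousAt.2 fun x ↦ tendsto_iff_norm_sub_tendsto_zero.2 ?_
  have hre : Continuous fun p : X × X ↦ RCLike.re (inner 𝕜 (k p.1) (k p.2)) :=
    RCLike.continuous_re.comp hk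
  have hsq : Continuous fun y ↦ ‖k y - k x‖ ^ 2 := by
    simp only [norm_sub_sq (𝕜 := 𝕜), ← inner_self_eq_norm_sq (𝕜 := 𝕜)]
    exact ((hre.comp (.prodMk continuous_id continuous_id)).sub
      (continuous_const.mul (hre.comp (.prodMk continuous_id continuous_const)))).add
        continuous_const
  simpa [Function.comp_def] using (Real.continuous_sqrt.comp hsq).tendsto x

/-- A seminorm on a Hilbert space is completely continuous if it tends to zero along every bounded
weakly null filter. -/
def IsCompletelyContinuous (N : Seminorm 𝕜 H) : Prop :=
  ∀ l : Filter H, BoundedWeaklyNull 𝕜 l id → Tendsto N l (𝓝 0)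

variable [CompleteSpace H]

/-- The Riesz representative of a functional, seen from the weak-* topology. -/
def rieszRep (a : WeakDual 𝕜 H) : H := (InnerProductSpace.toDual 𝕜 H).symm a.toStrongDual

lemma norm_rieszRep (a : WeakDual 𝕜 H) : ‖rieszRep a‖ = ‖a.toStrongDual‖ :=
  LinearIsometryEquiv.norm_map _ _

lemma inner_rieszRep (a : WeakDual 𝕜 H) (g : H) :
    inner 𝕜 g (rieszRep a) = starRingEnd 𝕜 (a g) := by
  rw [← inner_conj_symm, rieszRep, InnerProductSpace.toDual_symm_apply]
  rfl

lemma boundedWeaklyNull_rieszRep_sub (a : WeakDual 𝕜 H) (r : ℝ) :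
    BoundedWeaklyNull 𝕜 (𝓝[WeakDual.toStrongDual ⁻¹' Metric.closedBall 0 r] a)
      fun b ↦ rieszRep b - rieszRep a := by
  refine ⟨isBoundedUnder_of_eventually_le (a := r + ‖rieszRep a‖) ?_, fun g ↦ ?_⟩
  · filter_upwards [self_mem_nhdsWithin] with b hb
    refine (norm_sub_le _ _).trans ?_
    gcongr
    simpa [norm_rieszRep] using hb
  · have heval : Tendsto (fun b : WeakDual 𝕜 H ↦ b g)
        (𝓝[WeakDual.toStrongDual ⁻¹' Metric.closedBall 0 r] a) (𝓝 (a g)) :=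
      ((WeakDual.eval_continuous g).tendsto a).mono_left nhdsWithin_le_nhds
    simpa [inner_sub_right, inner_rieszRep] using
      ((RCLike.continuous_conj.tendsto _).comp heval).sub_const (starRingEnd 𝕜 (a g))

lemma IsCompletelyContinuous.continuousOn_comp_rieszRep {N : Seminorm 𝕜 H}
    (hN : IsCompletelyContinuous N) (r : ℝ) :
    ContinuousOn (fun a : WeakDual 𝕜 H ↦ N (rieszRep a))
      (WeakDual.toStrongDual ⁻¹' Metric.closedBall 0 r) := by
  intro a _
  have hnull := boundedWeaklyNull_rieszRep_sub a r
  have hlim := hN (map (fun b ↦ rieszRep b - rieszRep a)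
    (𝓝[WeakDual.toStrongDual ⁻¹' Metric.closedBall 0 r] a)) ⟨hnull.1, hnull.2⟩
  rw [ContinuousWithinAt, tendsto_iff_dist_tendsto_zero]
  exact squeeze_zero (fun _ ↦ dist_nonneg)
    (fun b ↦ abs_sub_map_le_sub N (rieszRep b) (rieszRep a)) hlim

lemma IsCompletelyContinuous.exists_isMaxOn_closedBall {N : Seminorm 𝕜 H}
    (hN : IsCompletelyContinuous N) :
    ∃ f ∈ Metric.closedBall (0 : H) 1, IsMaxOn N (Metric.closedBall 0 1) f := by
  obtain ⟨a, ha, hmax⟩ := (WeakDual.isCompact_closedBall (𝕜 := 𝕜) (0 : StrongDual 𝕜 H) 1)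
    |>.exists_isMaxOn ⟨0, by simp⟩ (hN.continuousOn_comp_rieszRep 1)
  refine ⟨rieszRep a, by simpa [norm_rieszRep] using ha, fun g hg ↦ ?_⟩
  let b : WeakDual 𝕜 H := StrongDual.toWeakDual (InnerProductSpace.toDual 𝕜 H g)
  have hb : rieszRep b = g := (InnerProductSpace.toDual 𝕜 H).symm_apply_apply g
  have hbmem : b ∈ WeakDual.toStrongDual ⁻¹' Metric.closedBall (0 : StrongDual 𝕜 H) 1 := by
    rw [Set.mem_preimage, mem_closedBall_zero_iff, ← norm_rieszRep, hb]
    simpa using hg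
  simpa [hb] using hmax hbmem

lemma IsCompletelyContinuous.exists_maximizer {N : Seminorm 𝕜 H} (hN : IsCompletelyContinuous N)
    (hN0 : N ≠ 0) : ∃ f ≠ 0, ∀ g, N g * ‖f‖ ≤ N f * ‖g‖ := by
  obtain ⟨f, hf, hmax⟩ := hN.exists_isMaxOn_closedBall
  have hbound (g : H) : N g ≤ N f * ‖g‖ := by
    rcases eq_or_ne g 0 with rfl | hg
    · simp
    have hunit := hmax (show ((‖g‖⁻¹ : ℝ) : 𝕜) • g ∈ Metric.closedBall (0 : H) 1 by
      simp [norm_smul, hg])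
    have hscale : ‖g‖⁻¹ * N g ≤ N f := by simpa [map_smul_eq_mul] using hunit
    rwa [inv_mul_le_iff₀ (norm_pos_iff.2 hg), mul_comm] at hscale
  refine ⟨f, ?_, fun g ↦ ?_⟩
  · rintro rfl
    exact hN0 <| Seminorm.ext fun g ↦ le_antisymm (by simpa using hbound g) (apply_nonneg N g)
  · exact (mul_le_of_le_one_right (apply_nonneg N g) (by simpa using hf)).trans (hbound g)

end Hilbert

section LpBounds

variable {α E : Type*} [MeasurableSpace α] {μ : Measure α} [NormedAddCommGroup E]

lemma eLpNorm_le_eLpNorm_top_rpow_mul {p q : ℝ} (hp : 0 < p) (hpq : p ≤ q) {f : α → E}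
    (hf : AEStronglyMeasurable f μ) :
    eLpNorm f (ENNReal.ofReal q) μ ≤
      eLpNorm f ∞ μ ^ (1 - p / q) * eLpNorm f (ENNReal.ofReal p) μ ^ (p / q) := by
  have hq : 0 < q := hp.trans_le hpq
  have hexp : q = (q - p) + p := by ring
  have hbound : ∫⁻ x, ‖f x‖ₑ ^ q ∂μ ≤ eLpNorm f ∞ μ ^ (q - p) * ∫⁻ x, ‖f x‖ₑ ^ p ∂μ := by
    rw [← lintegral_const_mul'' _ (hf.enorm.pow_const p)]
    refine lintegral_mono_ae ?_
    filter_upwards [ae_le_eLpNormEssSup (f := f)] with x hx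
    rw [eLpNorm_exponent_top]
    nth_rw 1 [hexp]
    rw [ENNReal.rpow_add_of_nonneg _ _ (sub_nonneg.2 hpq) hp.le]
    gcongr
  rw [eLpNorm_eq_lintegral_rpow_enorm_toReal (p := ENNReal.ofReal q) (by simpa) (by simp),
    eLpNorm_eq_lintegral_rpow_enorm_toReal (p := ENNReal.ofReal p) (by simpa) (by simp),
    ENNReal.toReal_ofReal hq.le, ENNReal.toReal_ofReal hp.le, ← ENNReal.rpow_mul,
    show 1 - p / q = (q - p) * (1 / q) by field_simp, show 1 / p * (p / q) = 1 / q by field_simp,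
    ENNReal.rpow_mul, ← ENNReal.mul_rpow_of_nonneg _ _ (by positivity)]
  gcongr

lemma eLpNorm_one_le_rpow_measure_mul {D : Set α} {f : α → E}
    (hf : AEStronglyMeasurable f μ) (hD : MeasurableSet D) (hfD : D.indicator f = f) :
    eLpNorm f 1 μ ≤ μ D ^ (1 / 2 : ℝ) * eLpNorm f 2 μ := by
  have h := eLpNorm_le_eLpNorm_mul_rpow_measure_univ (p := 1) (q := 2) one_le_two
    (hf.mono_measure (Measure.restrict_le_self (s := D)))
  rw [← eLpNorm_indicator_eq_eLpNorm_restrict hD, ← eLpNorm_indicator_eq_eLpNorm_restrict hD,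
    hfD, Measure.restrict_apply_univ, mul_comm] at h
  norm_num at h ⊢
  exact h

lemma eLpNorm_sub_le_sum {p : ℝ≥0∞} (hp : 1 ≤ p) {u : ℕ → α → E}
    (hu : ∀ n, AEStronglyMeasurable (u n) μ) (n : ℕ) :
    eLpNorm (u n - u 0) p μ ≤ ∑ i ∈ Finset.range n, eLpNorm (u (i + 1) - u i) p μ := by
  rw [← Finset.sum_range_sub]
  exact eLpNorm_sum_le (fun i _ ↦ (hu (i + 1)).sub (hu i)) hp

lemma eLpNorm_sub_le_tsum {p : ℝ≥0∞} (hp : 1 ≤ p) {u : ℕ → α → E} {v : α → E}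
    (hu : ∀ n, AEStronglyMeasurable (u n) μ) (huv : TendstoInMeasure μ u atTop v) :
    eLpNorm (v - u 0) p μ ≤ ∑' i, eLpNorm (u (i + 1) - u i) p μ := by
  obtain ⟨ns, -, hae⟩ := huv.exists_seq_tendsto_ae
  refine (Lp.eLpNorm_lim_le_liminf_eLpNorm (f := fun i ↦ u (ns i) - u 0)
    (fun i ↦ (hu _).sub (hu _)) _ ?_).trans ?_
  · filter_upwards [hae] with x hx using hx.sub_const _
  · exact liminf_le_of_frequently_le' <| Frequently.of_forall fun i ↦
      (eLpNorm_sub_le_sum hp hu (ns i)).trans (ENNReal.sum_le_tsum _)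

end LpBounds

section Fourier

variable {E : Type*} [NormedAddCommGroup E] [InnerProductSpace ℝ E] [FiniteDimensional ℝ E]
  [MeasurableSpace E] [BorelSpace E]

lemma ae_eq_of_forall_integral_mul_schwartz_eq {f g : E → ℂ} (hf : LocallyIntegrable f)
    (hg : LocallyIntegrable g)
    (h : ∀ φ : SchwartzMap E ℂ, ∫ x, f x * φ x = ∫ x, g x * φ x) : f =ᵐ[volume] g := by
  refine ae_eq_of_integral_contDiff_smul_eq hf hg fun φ hφ hφc ↦ ?_
  have hc : HasCompactSupport (Complex.ofRealCLM ∘ φ) := hφc.comp_left rfl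
  simpa [mul_comm] using h (hc.toSchwartzMap (Complex.ofRealCLM.contDiff.comp hφ))

lemma integral_fourier_mul_schwartz (h : E →₂[volume] ℂ) (φ : SchwartzMap E ℂ) :
    ∫ ξ, (𝓕 h : E →₂[volume] ℂ) ξ * φ ξ = ∫ x, h x * 𝓕 (⇑φ) x := by
  have hpair := congrArg (fun T ↦ T φ) (Lp.fourier_toTemperedDistribution_eq h)
  simp only [TemperedDistribution.fourier_apply, Lp.toTemperedDistribution_apply,
    smul_eq_mul, SchwartzMap.fourier_coe] at hpair
  simpa only [mul_comm] using hpair.symm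

lemma integral_fourierInv_mul_schwartz (h : E →₂[volume] ℂ) (φ : SchwartzMap E ℂ) :
    ∫ x, (𝓕⁻ h : E →₂[volume] ℂ) x * φ x = ∫ ξ, h ξ * 𝓕⁻ (⇑φ) ξ := by
  have hpair := congrArg (fun T ↦ T φ) (Lp.fourierInv_toTemperedDistribution_eq h)
  simp only [TemperedDistribution.fourierInv_apply, Lp.toTemperedDistribution_apply,
    smul_eq_mul, SchwartzMap.fourierInv_coe] at hpair
  simpa only [mul_comm] using hpair.symm

lemma continuous_fourierInv {h : E → ℂ} (hh : Integrable h) : Continuous (𝓕⁻ h) := by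
  have hcont : Continuous (𝓕 h) := VectorFourier.fourierIntegral_continuous continuous_fourierChar
    (by exact continuous_inner) hh
  rw [show 𝓕⁻ h = 𝓕 h ∘ Neg.neg from funext (fourierInv_eq_fourier_neg h)]
  exact hcont.comp continuous_neg

lemma integral_fourierInv_mul_eq {f g : E → ℂ} (hf : Integrable f) (hg : Integrable g) :
    ∫ x, 𝓕⁻ f x * g x = ∫ ξ, f ξ * 𝓕⁻ g ξ := by
  have hflip := VectorFourier.integral_fourierIntegral_smul_eq_flip (L := innerₗ E)
    (μ := volume) (ν := volume) continuous_fourierChar (by exact continuous_inner) hf hg.comp_neg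
  calc ∫ x, 𝓕⁻ f x * g x = ∫ x, 𝓕 f x * g (-x) := by
        rw [← integral_neg_eq_self]
        simp only [fourierInv_eq_fourier_neg, neg_neg]
    _ = ∫ ξ, f ξ * 𝓕 (fun x ↦ g (-x)) ξ := by simpa only [flip_innerₗ, smul_eq_mul] using! hflip
    _ = ∫ ξ, f ξ * 𝓕⁻ g ξ := by simp only [fourierInv_eq_fourier_comp_neg]

lemma fourierInv_ae_eq_fourierInv_toLp {h : E → ℂ} (h₁ : Integrable h) (h₂ : MemLp h 2) :
    𝓕⁻ h =ᵐ[volume] (𝓕⁻ (h₂.toLp h) : E →₂[volume] ℂ) := by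
  refine ae_eq_of_forall_integral_mul_schwartz_eq (continuous_fourierInv h₁).locallyIntegrable
    ((Lp.memLp _).locallyIntegrable one_le_two) fun φ ↦ ?_
  rw [integral_fourierInv_mul_schwartz, integral_fourierInv_mul_eq h₁ φ.integrable]
  exact integral_congr_ae (h₂.coeFn_toLp.mono fun ξ hξ ↦ by simp only [hξ])

lemma eLpNorm_fourierInv_Lp (h : E →₂[volume] ℂ) :
    eLpNorm (𝓕⁻ h : E →₂[volume] ℂ) 2 volume = eLpNorm h 2 volume := by
  rw [← Lp.enorm_def, ← Lp.enorm_def]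
  exact (Lp.fourierTransformₗᵢ E ℂ).symm.enorm_map h

lemma eLpNorm_two_fourierInv {h : E → ℂ} (h₁ : Integrable h) (h₂ : MemLp h 2) :
    eLpNorm (𝓕⁻ h) 2 volume = eLpNorm h 2 volume := by
  rw [eLpNorm_congr_ae (fourierInv_ae_eq_fourierInv_toLp h₁ h₂), eLpNorm_fourierInv_Lp,
    eLpNorm_congr_ae h₂.coeFn_toLp]

lemma eLpNorm_top_fourierInv_le (h : E → ℂ) : eLpNorm (𝓕⁻ h) ∞ volume ≤ eLpNorm h 1 volume := by
  refine eLpNormEssSup_le_of_ae_enorm_bound (ae_of_all _ fun x ↦ ?_)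
  rw [fourierInv_eq, eLpNorm_one_eq_lintegral_enorm]
  exact (enorm_integral_le_lintegral_enorm _).trans_eq <|
    lintegral_congr fun ξ ↦ by rw [← ofReal_norm, Circle.norm_smul, ofReal_norm]

-- Bernstein's inequality: interpolate between `L¹ → L^∞` and Plancherel.
lemma eLpNorm_fourierInv_le_rpow_volume_mul {p : ℝ} (hp : 2 ≤ p) {h : E → ℂ} {D : Set E}
    (h₁ : Integrable h) (h₂ : MemLp h 2) (hD : MeasurableSet D) (hhD : D.indicator h = h) :
    eLpNorm (𝓕⁻ h) (ENNReal.ofReal p) volume ≤ volume D ^ (1 / 2 - 1 / p) * eLpNorm h 2 volume := by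
  have hp0 : 0 < p := by linarith
  have hθ : 0 ≤ 1 - 2 / p := by rw [sub_nonneg, div_le_one hp0]; exact hp
  calc eLpNorm (𝓕⁻ h) (ENNReal.ofReal p) volume
      ≤ eLpNorm (𝓕⁻ h) ∞ volume ^ (1 - 2 / p) * eLpNorm (𝓕⁻ h) 2 volume ^ (2 / p) := by
        rw [← ENNReal.ofReal_ofNat 2]
        exact eLpNorm_le_eLpNorm_top_rpow_mul two_pos hp
          (continuous_fourierInv h₁).aestronglyMeasurable
    _ ≤ (volume D ^ (1 / 2 : ℝ) * eLpNorm h 2 volume) ^ (1 - 2 / p) *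
          eLpNorm h 2 volume ^ (2 / p) := by
        rw [eLpNorm_two_fourierInv h₁ h₂]
        gcongr
        exact (eLpNorm_top_fourierInv_le h).trans
          (eLpNorm_one_le_rpow_measure_mul h₂.1 hD hhD)
    _ = volume D ^ (1 / 2 - 1 / p) * eLpNorm h 2 volume := by
        rw [ENNReal.mul_rpow_of_nonneg _ _ hθ, ← ENNReal.rpow_mul, mul_assoc,
          ← ENNReal.rpow_add_of_nonneg _ _ hθ (by positivity), sub_add_cancel, ENNReal.rpow_one,
          show 1 / 2 * (1 - 2 / p) = 1 / 2 - 1 / p by ring]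

/-- The frequency truncation of `𝓕⁻ h` to the ball of radius `R`, as an honest (everywhere defined)
function. -/
def lowPass (R : ℝ) (h : E → ℂ) : E → ℂ := 𝓕⁻ ((Metric.ball 0 R).indicator h)

lemma integrable_indicator_of_memLp_two {h : E → ℂ} (hh : MemLp h 2) {D : Set E}
    (hD : MeasurableSet D) (hvol : volume D ≠ ∞) : Integrable (D.indicator h) := by
  have : IsFiniteMeasure (volume.restrict D) := ⟨by simpa using hvol.lt_top⟩
  exact IntegrableOn.integrable_indicator ((hh.restrict D).integrable one_le_two) hD

lemma continuous_lowPass {h : E → ℂ} (hh : MemLp h 2) (R : ℝ) : Continuous (lowPass R h) :=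
  continuous_fourierInv
    (integrable_indicator_of_memLp_two hh measurableSet_ball measure_ball_lt_top.ne)

lemma fourierInv_sub {f g : E → ℂ} (hf : Integrable f) (hg : Integrable g) :
    𝓕⁻ (f - g) = 𝓕⁻ f - 𝓕⁻ g := by
  ext x
  have hconv {h : E → ℂ} (hh : Integrable h) : Integrable fun ξ ↦ 𝐞 ⟪ξ, x⟫ • h ξ := by
    simpa using (fourierIntegral_convergent_iff (-x)).2 hh
  simp only [fourierInv_eq, Pi.sub_apply, smul_sub]
  exact integral_sub (hconv hf) (hconv hg)

lemma eLpNorm_lowPass_sub_lowPass_le {p : ℝ} (hp : 2 ≤ p) {h : E → ℂ} (hh : MemLp h 2) {r R : ℝ}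
    (hrR : r ≤ R) :
    eLpNorm (lowPass R h - lowPass r h) (ENNReal.ofReal p) volume ≤
      volume (Metric.ball (0 : E) R) ^ (1 / 2 - 1 / p) *
        eLpNorm ((Metric.ball 0 r)ᶜ.indicator h) 2 volume := by
  let annulus : Set E := Metric.ball 0 R \ Metric.ball 0 r
  have hmeas : MeasurableSet annulus := measurableSet_ball.diff measurableSet_ball
  have hvol : volume annulus ≤ volume (Metric.ball (0 : E) R) := measure_mono Set.sdiff_subset
  have hint {D : Set E} (hD : MeasurableSet D) (hDR : D ⊆ Metric.ball 0 R) :=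
    integrable_indicator_of_memLp_two hh hD (measure_ne_top_of_subset hDR measure_ball_lt_top.ne)
  have hdiff : lowPass R h - lowPass r h = 𝓕⁻ (annulus.indicator h) := by
    rw [Set.indicator_sdiff (Metric.ball_subset_ball hrR), fourierInv_sub
      (hint measurableSet_ball subset_rfl) (hint measurableSet_ball (Metric.ball_subset_ball hrR))]
    rfl
  have hα : 0 ≤ 1 / 2 - 1 / p := sub_nonneg.2 (one_div_le_one_div_of_le two_pos hp)
  rw [hdiff]
  refine (eLpNorm_fourierInv_le_rpow_volume_mul hp (hint hmeas Set.sdiff_subset)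
    (hh.indicator hmeas) hmeas (by rw [Set.indicator_indicator, Set.inter_self])).trans ?_
  gcongr
  refine eLpNorm_mono fun ξ ↦ ?_
  exact norm_indicator_le_of_subset (fun ξ hξ ↦ hξ.2) h ξ

lemma eLpNorm_lowPass_sub_fourierInv (h : E →₂[volume] ℂ) (R : ℝ) :
    eLpNorm (lowPass R h - ⇑(𝓕⁻ h : E →₂[volume] ℂ)) 2 volume =
      eLpNorm ((Metric.ball 0 R)ᶜ.indicator h) 2 volume := by
  have hL2 : MemLp ((Metric.ball 0 R).indicator h) 2 volume :=
    (Lp.memLp h).indicator measurableSet_ball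
  have hlow : lowPass R h =ᵐ[volume] ⇑(𝓕⁻ (hL2.toLp _) : E →₂[volume] ℂ) :=
    fourierInv_ae_eq_fourierInv_toLp (integrable_indicator_of_memLp_two (Lp.memLp h)
      measurableSet_ball measure_ball_lt_top.ne) hL2
  have hsub : (𝓕⁻ (hL2.toLp _) - 𝓕⁻ h : E →₂[volume] ℂ) = 𝓕⁻ (hL2.toLp _ - h) :=
    (map_sub (Lp.fourierTransformₗᵢ E ℂ).symm _ _).symm
  rw [eLpNorm_congr_ae (hlow.sub EventuallyEq.rfl), ← eLpNorm_congr_ae (Lp.coeFn_sub _ _), hsub,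
    eLpNorm_fourierInv_Lp, eLpNorm_congr_ae (Lp.coeFn_sub _ _),
    eLpNorm_congr_ae (hL2.coeFn_toLp.sub EventuallyEq.rfl), ← eLpNorm_neg, neg_sub,
    ← Set.indicator_compl]

lemma tendstoInMeasure_lowPass (h : E →₂[volume] ℂ) {B q : ℝ≥0∞} (hB : B ≠ ∞) (hq : q < 1)
    (htail : ∀ j : ℕ, eLpNorm ((Metric.ball 0 (2 ^ j))ᶜ.indicator h) 2 volume ≤ B * q ^ j) :
    TendstoInMeasure volume (fun j : ℕ ↦ lowPass (2 ^ j) h) atTop (𝓕⁻ h : E →₂[volume] ℂ) := by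
  refine tendstoInMeasure_of_tendsto_eLpNorm two_ne_zero
    (fun j ↦ (continuous_lowPass (Lp.memLp h) _).aestronglyMeasurable)
    (Lp.aestronglyMeasurable _) ?_
  simp only [eLpNorm_lowPass_sub_fourierInv]
  refine tendsto_of_tendsto_of_tendsto_of_le_of_le tendsto_const_nhds ?_ (fun _ ↦ zero_le) htail
  simpa using ENNReal.Tendsto.const_mul (ENNReal.tendsto_pow_atTop_nhds_zero_of_lt_one hq)
    (Or.inr hB)

lemma volume_ball_two_pow (j : ℕ) (R : ℝ) :
    volume (Metric.ball (0 : E) (2 ^ j * R)) =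
      (2 ^ Module.finrank ℝ E) ^ j * volume (Metric.ball (0 : E) R) := by
  rw [Measure.addHaar_ball_mul_of_pos _ _ (by positivity), ENNReal.ofReal_pow (by positivity),
    ENNReal.ofReal_pow (by positivity), ENNReal.ofReal_ofNat, ← pow_mul, ← pow_mul, mul_comm j]

/-- The ratio of the geometric series bounding the dyadic pieces of `𝓕⁻ h` in `L^p` when the `L²`
tails of `h` decay like `q ^ j`: Bernstein's inequality costs `2 ^ (d * (1/2 - 1/p))` per octave. -/
def sobolevRatio (d : ℕ) (p : ℝ) (q : ℝ≥0∞) : ℝ≥0∞ := (2 ^ d) ^ (1 / 2 - 1 / p) * q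

lemma eLpNorm_dyadic_piece_le {p : ℝ} (hp : 2 ≤ p) {h : E → ℂ} (hh : MemLp h 2) {B q : ℝ≥0∞}
    (htail : ∀ j : ℕ, eLpNorm ((Metric.ball 0 (2 ^ j))ᶜ.indicator h) 2 volume ≤ B * q ^ j)
    (j : ℕ) :
    eLpNorm (lowPass (2 ^ (j + 1)) h - lowPass (2 ^ j) h) (ENNReal.ofReal p) volume ≤
      volume (Metric.ball (0 : E) 2) ^ (1 / 2 - 1 / p) * B *
        sobolevRatio (Module.finrank ℝ E) p q ^ j := by
  have hα : 0 ≤ 1 / 2 - 1 / p := sub_nonneg.2 (one_div_le_one_div_of_le two_pos hp)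
  refine (eLpNorm_lowPass_sub_lowPass_le hp hh
    (pow_le_pow_right₀ one_le_two j.le_succ)).trans ?_
  calc _ ≤ volume (Metric.ball (0 : E) (2 ^ j * 2)) ^ (1 / 2 - 1 / p) * (B * q ^ j) := by
        rw [← pow_succ]; gcongr; exact htail j
    _ = _ := by
        rw [volume_ball_two_pow, ENNReal.mul_rpow_of_nonneg _ _ hα, sobolevRatio, mul_pow,
          ← ENNReal.rpow_natCast, ← ENNReal.rpow_natCast (_ ^ _),
          ← ENNReal.rpow_mul, mul_comm (j : ℝ), ENNReal.rpow_mul]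
        ring

lemma eLpNorm_fourierInv_sub_lowPass_le {p : ℝ} (hp : 2 ≤ p) (h : E →₂[volume] ℂ) {B q : ℝ≥0∞}
    (hB : B ≠ ∞) (hq : q < 1)
    (htail : ∀ j : ℕ, eLpNorm ((Metric.ball 0 (2 ^ j))ᶜ.indicator h) 2 volume ≤ B * q ^ j)
    (J : ℕ) :
    eLpNorm (⇑(𝓕⁻ h : E →₂[volume] ℂ) - lowPass (2 ^ J) h) (ENNReal.ofReal p) volume ≤
      volume (Metric.ball (0 : E) 2) ^ (1 / 2 - 1 / p) * B *
        (sobolevRatio (Module.finrank ℝ E) p q ^ J *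
          (1 - sobolevRatio (Module.finrank ℝ E) p q)⁻¹) := by
  have hlim : TendstoInMeasure volume (fun i ↦ lowPass (2 ^ (i + J)) h) atTop
      (𝓕⁻ h : E →₂[volume] ℂ) :=
    (tendstoInMeasure_lowPass h hB hq htail).comp (tendsto_add_atTop_nat J)
  have hsum := eLpNorm_sub_le_tsum (p := ENNReal.ofReal p)
    (ENNReal.one_le_ofReal.2 (by linarith))
    (fun i ↦ (continuous_lowPass (Lp.memLp h) _).aestronglyMeasurable) hlim
  rw [zero_add] at hsum
  refine hsum.trans ?_
  rw [← ENNReal.tsum_geometric, ← ENNReal.tsum_mul_left, ← ENNReal.tsum_mul_left]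
  gcongr with i
  rw [← pow_add, add_comm J, add_right_comm]
  exact eLpNorm_dyadic_piece_le hp (Lp.memLp h) htail (i + J)

lemma memLp_indicator_ball_fourierChar (R : ℝ) (x : E) :
    MemLp ((Metric.ball 0 R).indicator fun ξ ↦ (𝐞 (-⟪ξ, x⟫) : ℂ)) 2 (volume : Measure E) := by
  have : IsFiniteMeasure (volume.restrict (Metric.ball (0 : E) R)) :=
    ⟨by simpa using measure_ball_lt_top⟩
  exact (memLp_indicator_iff_restrict measurableSet_ball).2 <| MemLp.of_bound
    (Continuous.aestronglyMeasurable (by fun_prop)) 1 (ae_of_all _ fun ξ ↦ (Circle.norm_coe _).le)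

/-- The element of `L²` representing the evaluation functional `h ↦ lowPass R h x`. -/
def lowPassKernel (R : ℝ) (x : E) : E →₂[volume] ℂ :=
  (memLp_indicator_ball_fourierChar R x).toLp _

lemma coeFn_lowPassKernel (R : ℝ) (x : E) :
    lowPassKernel R x =ᵐ[volume] (Metric.ball 0 R).indicator fun ξ ↦ (𝐞 (-⟪ξ, x⟫) : ℂ) :=
  MemLp.coeFn_toLp _

lemma inner_lowPassKernel (R : ℝ) (x : E) (h : E →₂[volume] ℂ) :
    inner ℂ (lowPassKernel R x) h = lowPass R h x := by
  rw [L2.inner_def, lowPass, fourierInv_eq]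
  refine integral_congr_ae ((coeFn_lowPassKernel R x).mono fun ξ hξ ↦ ?_)
  by_cases hmem : ξ ∈ Metric.ball 0 R <;>
    simp [hξ, hmem, Circle.smul_def, mul_comm, ← Circle.coe_inv_eq_conj, ← AddChar.map_neg_eq_inv]

lemma inner_lowPassKernel_lowPassKernel (R : ℝ) (x y : E) :
    inner ℂ (lowPassKernel R x) (lowPassKernel R y) =
      𝓕 ((Metric.ball (0 : E) R).indicator fun _ ↦ (1 : ℂ)) (y - x) := by
  rw [inner_lowPassKernel, lowPass, fourierInv_eq, fourier_eq]
  refine integral_congr_ae ((coeFn_lowPassKernel R y).mono fun ξ hξ ↦ ?_)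
  by_cases hmem : ξ ∈ Metric.ball 0 R
  · have hphase : -⟪ξ, y - x⟫ = ⟪ξ, x⟫ + -⟪ξ, y⟫ := by rw [inner_sub_right]; ring
    simp [hξ, hmem, Circle.smul_def, hphase, AddChar.map_add_eq_mul]
  · simp [hmem]

lemma integrable_indicator_ball_one (R : ℝ) :
    Integrable ((Metric.ball (0 : E) R).indicator fun _ ↦ (1 : ℂ)) :=
  (integrable_indicator_iff measurableSet_ball).2 (integrableOn_const measure_ball_lt_top.ne)

lemma continuous_lowPassKernel (R : ℝ) : Continuous (lowPassKernel R : E → E →₂[volume] ℂ) := by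
  refine continuous_of_continuous_inner (𝕜 := ℂ) ?_
  simp only [inner_lowPassKernel_lowPassKernel]
  have hcont : Continuous (𝓕 ((Metric.ball (0 : E) R).indicator fun _ ↦ (1 : ℂ))) :=
    VectorFourier.fourierIntegral_continuous continuous_fourierChar (by exact continuous_inner)
      (integrable_indicator_ball_one R)
  fun_prop

lemma exists_forall_norm_inner_lowPassKernel_le (R : ℝ) {δ : ℝ} (hδ : 0 < δ) :
    ∃ ρ : ℝ, ∀ x y : E, ρ ≤ dist x y →
      ‖inner ℂ (lowPassKernel R x) (lowPassKernel R y)‖ ≤ δ := by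
  have hRL : Tendsto (𝓕 ((Metric.ball (0 : E) R).indicator fun _ ↦ (1 : ℂ)))
      (comap norm atTop) (𝓝 0) := by
    rw [comap_norm_atTop, Metric.cobounded_eq_cocompact]
    exact tendsto_integral_exp_inner_smul_cocompact _
  obtain ⟨ρ, hρ⟩ := eventually_atTop.1 <| eventually_comap.1 <|
    hRL.norm.eventually_le_const (by simpa using hδ)
  exact ⟨ρ, fun x y hxy ↦ inner_lowPassKernel_lowPassKernel R x y ▸
    hρ _ hxy _ (dist_eq_norm' x y).symm⟩

lemma norm_lowPassKernel (R : ℝ) (x : E) :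
    ‖lowPassKernel R x‖ = ‖lowPassKernel R (0 : E)‖ := by
  have hsq : ‖lowPassKernel R x‖ ^ 2 = ‖lowPassKernel R (0 : E)‖ ^ 2 := by
    simp only [← inner_self_eq_norm_sq (𝕜 := ℂ), inner_lowPassKernel_lowPassKernel, sub_self]
  exact (sq_eq_sq₀ (norm_nonneg _) (norm_nonneg _)).1 hsq

end Fourier

section Symmetry

variable {E : Type*} [NormedAddCommGroup E] [InnerProductSpace ℝ E]

/-- Far from the origin, `Γ` moves every point to arbitrarily many points that are arbitrarily far
apart. This is the only property of the symmetry group from which compactness is derived. -/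
def HasWideOrbits (Γ : Set (E ≃ₗᵢ[ℝ] E)) : Prop :=
  ∀ (N : ℕ) (R : ℝ), ∃ ρ : ℝ, ∀ x : E, ρ ≤ ‖x‖ →
    ∃ A : Fin N → E ≃ₗᵢ[ℝ] E, (∀ i, A i ∈ Γ) ∧ Pairwise fun i j ↦ R ≤ dist (A i x) (A j x)

variable [FiniteDimensional ℝ E] [MeasurableSpace E] [BorelSpace E]

/-- The square integrable functions invariant under the isometries in `Γ`. -/
def invariantL2 (Γ : Set (E ≃ₗᵢ[ℝ] E)) : Submodule ℂ (E →₂[volume] ℂ) :=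
  ⨅ A ∈ Γ, LinearMap.eqLocus
    (Lp.compMeasurePreservingₗᵢ ℂ A A.measurePreserving).toLinearMap LinearMap.id

variable {Γ : Set (E ≃ₗᵢ[ℝ] E)}

lemma mem_invariantL2 {h : E →₂[volume] ℂ} :
    h ∈ invariantL2 Γ ↔ ∀ A ∈ Γ, h ∘ A =ᵐ[volume] h := by
  simp only [invariantL2, Submodule.mem_iInf, LinearMap.mem_eqLocus]
  refine forall₂_congr fun A _ ↦ ?_
  rw [Lp.ext_iff]
  exact (Lp.coeFn_compMeasurePreserving h A.measurePreserving).congr_left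

instance completeSpace_invariantL2 : CompleteSpace (invariantL2 Γ) := by
  refine IsClosed.completeSpace_coe (hs := ?_)
  simp only [invariantL2, Submodule.coe_iInf]
  exact isClosed_biInter fun A _ ↦ isClosed_eq (LinearIsometry.continuous _) continuous_id

lemma toLp_mem_invariantL2 {h : E → ℂ} (hh : MemLp h 2 volume)
    (hinv : ∀ A ∈ Γ, h ∘ A =ᵐ[volume] h) : hh.toLp h ∈ invariantL2 Γ :=
  mem_invariantL2.2 fun A hA ↦
    ((A.measurePreserving.quasiMeasurePreserving.ae_eq_comp hh.coeFn_toLp).trans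
      (hinv A hA)).trans hh.coeFn_toLp.symm

lemma lowPass_apply_isometry {h : E → ℂ} {A : E ≃ₗᵢ[ℝ] E} (hA : h ∘ A =ᵐ[volume] h) (R : ℝ)
    (x : E) : lowPass R h (A x) = lowPass R h x := by
  have hind : (Metric.ball 0 R).indicator h ∘ A =ᵐ[volume] (Metric.ball 0 R).indicator h := by
    filter_upwards [hA] with ξ hξ
    by_cases hmem : ξ ∈ Metric.ball 0 R <;> simp_all
  rw [lowPass, ← fourierInv_comp_linearIsometry, fourierInv_eq, fourierInv_eq]
  exact integral_congr_ae (hind.mono fun ξ hξ ↦ by simp only [hξ])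

-- Strauss-type decay: `x` has many far apart images under `Γ`, and the evaluations there agree on
-- invariant functions while their kernels are almost orthogonal.
lemma exists_forall_norm_lowPass_le (hΓ : HasWideOrbits Γ) (R : ℝ) {η : ℝ} (hη : 0 < η) :
    ∃ ρ : ℝ, ∀ h ∈ invariantL2 Γ, ∀ x : E, ρ ≤ ‖x‖ → ‖lowPass R h x‖ ≤ η * ‖h‖ := by
  set κ := ‖lowPassKernel R (0 : E)‖ ^ 2
  obtain ⟨N, hN⟩ := exists_nat_gt (κ / (η ^ 2 / 2))
  have hN0 : (0 : ℝ) < N := lt_of_le_of_lt (by positivity) hN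
  have hκ : κ ≤ N * (η ^ 2 / 2) := ((div_lt_iff₀ (by positivity)).1 hN).le
  obtain ⟨r, hr⟩ := exists_forall_norm_inner_lowPassKernel_le (E := E) R
    (show 0 < η ^ 2 / 2 by positivity)
  obtain ⟨ρ, hρ⟩ := hΓ N r
  refine ⟨ρ, fun h hh x hx ↦ ?_⟩
  obtain ⟨A, hA, hfar⟩ := hρ x hx
  have hval (i : Fin N) : inner ℂ (lowPassKernel R (A i x)) h = lowPass R h x := by
    rw [inner_lowPassKernel, lowPass_apply_isometry (mem_invariantL2.1 hh _ (hA i))]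
  have hbound := card_mul_norm_sq_le_of_almost_orthogonal (κ := κ) (by exact_mod_cast hN0)
    (by positivity) (fun i ↦ (by rw [norm_lowPassKernel]))
    (fun i j hij ↦ hr _ _ (hfar hij)) hval
  refine le_of_sq_le_sq ?_ (by positivity)
  refine le_of_mul_le_mul_left (hbound.trans ?_) hN0
  calc (κ + N * (η ^ 2 / 2)) * ‖h‖ ^ 2 ≤ (N * (η ^ 2 / 2) + N * (η ^ 2 / 2)) * ‖h‖ ^ 2 := by gcongr
    _ = N * (η * ‖h‖) ^ 2 := by ring

variable {ι : Type*} {l : Filter ι} {f : ι → E →₂[volume] ℂ}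

lemma eventually_forall_norm_lowPass_le (hΓ : HasWideOrbits Γ) (hinv : ∀ i, f i ∈ invariantL2 Γ)
    (hf : BoundedWeaklyNull ℂ l f) (R : ℝ) {η : ℝ} (hη : 0 < η) :
    ∀ᶠ i in l, ∀ x, ‖lowPass R (f i) x‖ ≤ η := by
  obtain ⟨B, hB, hfB⟩ := hf.exists_bound
  obtain ⟨ρ, hρ⟩ := exists_forall_norm_lowPass_le hΓ R (div_pos hη hB)
  have hnear := hf.eventually_forall_norm_inner_le
    ((isCompact_closedBall (0 : E) ρ).image (continuous_lowPassKernel R)) hη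
  filter_upwards [hfB, hnear] with i hi hnear_i x
  rcases le_total ρ ‖x‖ with hx | hx
  · calc ‖lowPass R (f i) x‖ ≤ η / B * ‖f i‖ := hρ _ (hinv i) x hx
      _ ≤ η / B * B := by gcongr
      _ = η := by field_simp
  · rw [← inner_lowPassKernel]
    exact hnear_i _ (Set.mem_image_of_mem _ (mem_closedBall_zero_iff.2 hx))

lemma tendsto_eLpNorm_top_lowPass (hΓ : HasWideOrbits Γ) (hinv : ∀ i, f i ∈ invariantL2 Γ)
    (hf : BoundedWeaklyNull ℂ l f) (R : ℝ) :
    Tendsto (fun i ↦ eLpNorm (lowPass R (f i)) ∞ volume) l (𝓝 0) := by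
  refine ENNReal.tendsto_nhds_zero.2 fun ε hε ↦ ?_
  obtain ⟨η, hη0, hηε⟩ := ENNReal.lt_iff_exists_nnreal_btwn.1 hε
  filter_upwards [eventually_forall_norm_lowPass_le hΓ hinv hf R
    (NNReal.coe_pos.2 (ENNReal.coe_pos.1 hη0))] with i hi
  exact (eLpNormEssSup_le_of_ae_nnnorm_bound (ae_of_all _ hi)).trans hηε.le

lemma eLpNorm_two_lowPass_le (h : E →₂[volume] ℂ) (R : ℝ) :
    eLpNorm (lowPass R h) 2 volume ≤ ‖h‖ₑ := by
  rw [lowPass, eLpNorm_two_fourierInv (integrable_indicator_of_memLp_two (Lp.memLp h)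
    measurableSet_ball measure_ball_lt_top.ne) ((Lp.memLp h).indicator measurableSet_ball),
    Lp.enorm_def]
  exact eLpNorm_indicator_le _

lemma tendsto_eLpNorm_lowPass (hΓ : HasWideOrbits Γ) (hinv : ∀ i, f i ∈ invariantL2 Γ)
    (hf : BoundedWeaklyNull ℂ l f) (R : ℝ) {p : ℝ} (hp : 2 < p) :
    Tendsto (fun i ↦ eLpNorm (lowPass R (f i)) (ENNReal.ofReal p) volume) l (𝓝 0) := by
  obtain ⟨B, hB, hfB⟩ := hf.exists_bound
  have hθ : 0 < 1 - 2 / p := by rw [sub_pos, div_lt_one (by linarith)]; exact hp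
  have hbound : ∀ᶠ i in l, eLpNorm (lowPass R (f i)) (ENNReal.ofReal p) volume ≤
      eLpNorm (lowPass R (f i)) ∞ volume ^ (1 - 2 / p) * ENNReal.ofReal B ^ (2 / p) := by
    filter_upwards [hfB] with i hi
    refine (eLpNorm_le_eLpNorm_top_rpow_mul two_pos hp.le
      (continuous_lowPass (Lp.memLp _) R).aestronglyMeasurable).trans ?_
    gcongr
    rw [ENNReal.ofReal_ofNat]
    refine (eLpNorm_two_lowPass_le (f i) R).trans ?_
    rw [← ofReal_norm]
    gcongr
  refine tendsto_of_tendsto_of_tendsto_of_le_of_le' tendsto_const_nhds ?_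
    (.of_forall fun _ ↦ zero_le) hbound
  have hpow := (ENNReal.continuous_rpow_const (y := 1 - 2 / p)).tendsto 0 |>.comp
    (tendsto_eLpNorm_top_lowPass hΓ hinv hf R)
  rw [ENNReal.zero_rpow_of_pos hθ] at hpow
  simpa using ENNReal.Tendsto.mul_const hpow (Or.inr (by finiteness))

lemma tendsto_eLpNorm_fourierInv (hΓ : HasWideOrbits Γ) (hinv : ∀ i, f i ∈ invariantL2 Γ)
    (hf : BoundedWeaklyNull ℂ l f) {p : ℝ} (hp : 2 < p) {B q : ℝ≥0∞} (hB : B ≠ ∞) (hq : q < 1)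
    (hpq : sobolevRatio (Module.finrank ℝ E) p q < 1)
    (htail : ∀ᶠ i in l, ∀ j : ℕ,
      eLpNorm ((Metric.ball 0 (2 ^ j))ᶜ.indicator (f i)) 2 volume ≤ B * q ^ j) :
    Tendsto (fun i ↦ eLpNorm (𝓕⁻ (f i) : E →₂[volume] ℂ) (ENNReal.ofReal p) volume) l
      (𝓝 0) := by
  refine ENNReal.tendsto_nhds_zero.2 fun ε hε ↦ ?_
  have hα : 0 ≤ 1 / 2 - 1 / p := sub_nonneg.2 (one_div_le_one_div_of_le two_pos hp.le)
  obtain ⟨J, hJ⟩ : ∃ J : ℕ, volume (Metric.ball (0 : E) 2) ^ (1 / 2 - 1 / p) * B *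
      (sobolevRatio (Module.finrank ℝ E) p q ^ J *
        (1 - sobolevRatio (Module.finrank ℝ E) p q)⁻¹) ≤ ε / 2 := by
    have hgeom := ENNReal.Tendsto.const_mul (ENNReal.Tendsto.mul_const
      (ENNReal.tendsto_pow_atTop_nhds_zero_of_lt_one hpq)
      (Or.inr (ENNReal.inv_ne_top.2 (tsub_pos_of_lt hpq).ne')))
      (Or.inr (ENNReal.mul_ne_top (ENNReal.rpow_ne_top_of_nonneg hα
        (measure_ball_lt_top (μ := volume) (x := (0 : E)) (r := 2)).ne) hB))
    rw [zero_mul, mul_zero] at hgeom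
    exact (hgeom.eventually_le_const (ENNReal.half_pos hε.ne')).exists
  filter_upwards [htail, (tendsto_eLpNorm_lowPass hΓ hinv hf (2 ^ J) hp).eventually_le_const
    (ENNReal.half_pos hε.ne')] with i htail_i hlow
  calc eLpNorm (𝓕⁻ (f i) : E →₂[volume] ℂ) (ENNReal.ofReal p) volume
      ≤ eLpNorm (⇑(𝓕⁻ (f i) : E →₂[volume] ℂ) - lowPass (2 ^ J) (f i)) (ENNReal.ofReal p) volume +
          eLpNorm (lowPass (2 ^ J) (f i)) (ENNReal.ofReal p) volume := by
        have hcont := (continuous_lowPass (Lp.memLp (f i)) (2 ^ J)).aestronglyMeasurable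
          (μ := volume)
        simpa using eLpNorm_add_le ((Lp.aestronglyMeasurable _).sub hcont) hcont
          (ENNReal.one_le_ofReal.2 (by linarith : (1 : ℝ) ≤ p))
    _ ≤ ε / 2 + ε / 2 :=
        add_le_add ((eLpNorm_fourierInv_sub_lowPass_le hp.le (f i) hB hq htail_i J).trans hJ) hlow
    _ = ε := ENNReal.add_halves ε

lemma memLp_fourierInv {p : ℝ} (hp : 2 ≤ p) (h : E →₂[volume] ℂ) {B q : ℝ≥0∞} (hB : B ≠ ∞)
    (hq : q < 1) (hpq : sobolevRatio (Module.finrank ℝ E) p q < 1)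
    (htail : ∀ j : ℕ, eLpNorm ((Metric.ball 0 (2 ^ j))ᶜ.indicator h) 2 volume ≤ B * q ^ j) :
    MemLp (𝓕⁻ h : E →₂[volume] ℂ) (ENNReal.ofReal p) volume := by
  have hα : 0 ≤ 1 / 2 - 1 / p := sub_nonneg.2 (one_div_le_one_div_of_le two_pos hp)
  have hvol (r : ℝ) : volume (Metric.ball (0 : E) r) ^ (1 / 2 - 1 / p) ≠ ∞ :=
    ENNReal.rpow_ne_top_of_nonneg hα (measure_ball_lt_top (μ := volume)).ne
  have hcont := (continuous_lowPass (Lp.memLp h) (2 ^ 0)).aestronglyMeasurable (μ := volume)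
  have hlow : MemLp (lowPass (2 ^ 0) h) (ENNReal.ofReal p) volume :=
    ⟨hcont, (eLpNorm_fourierInv_le_rpow_volume_mul hp
      (integrable_indicator_of_memLp_two (Lp.memLp h) measurableSet_ball measure_ball_lt_top.ne)
      ((Lp.memLp h).indicator measurableSet_ball) measurableSet_ball
      (by simp [Set.indicator_indicator])).trans_lt
      (ENNReal.mul_lt_top (hvol (2 ^ 0)).lt_top ((Lp.memLp h).indicator measurableSet_ball).2)⟩
  have hhigh : MemLp (⇑(𝓕⁻ h : E →₂[volume] ℂ) - lowPass (2 ^ 0) h) (ENNReal.ofReal p) volume :=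
    ⟨(Lp.aestronglyMeasurable _).sub hcont,
      (eLpNorm_fourierInv_sub_lowPass_le hp h hB hq htail 0).trans_lt <| ENNReal.mul_lt_top
        (ENNReal.mul_lt_top (hvol _).lt_top hB.lt_top) (by simpa using hpq)⟩
  simpa using hhigh.add hlow

/-- Pointwise (rather than almost everywhere) invariance under the isometries in `Γ`. -/
def InvariantUnder (Γ : Set (E ≃ₗᵢ[ℝ] E)) (u : E → ℂ) : Prop :=
  ∀ A ∈ Γ, ∀ x, u (A x) = u x

lemma exists_invariantUnder_ae_eq_fourierInv {h : E →₂[volume] ℂ} (hh : h ∈ invariantL2 Γ)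
    {B q : ℝ≥0∞} (hB : B ≠ ∞) (hq : q < 1)
    (htail : ∀ j : ℕ, eLpNorm ((Metric.ball 0 (2 ^ j))ᶜ.indicator h) 2 volume ≤ B * q ^ j) :
    ∃ v : E → ℂ, InvariantUnder Γ v ∧ v =ᵐ[volume] (𝓕⁻ h : E →₂[volume] ℂ) := by
  obtain ⟨j, -, hj⟩ := (tendstoInMeasure_lowPass h hB hq htail).exists_seq_tendsto_ae
  refine ⟨fun x ↦ limUnder atTop fun i ↦ lowPass (2 ^ j i) h x, fun A hA x ↦ ?_,
    hj.mono fun x hx ↦ hx.limUnder_eq⟩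
  simp only [lowPass_apply_isometry (mem_invariantL2.1 hh A hA)]

end Symmetry

section EllipticSymbol

/-- A radial Fourier symbol `ξ ↦ G ‖ξ‖` comparable to `(1 + ‖ξ‖²) ^ s` for some order `s > 0`. Only
the values of `G` on `[0, ∞)` are constrained. -/
structure IsEllipticSymbol (s : ℝ) (G : ℝ → ℝ) : Prop where
  order_pos : 0 < s
  measurable : Measurable G
  lower : ∃ a > 0, ∀ r ≥ 0, a * (1 + r ^ 2) ^ s ≤ G r
  upper : ∃ b, ∀ r ≥ 0, G r ≤ b * (1 + r ^ 2) ^ s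

variable {s : ℝ} {G : ℝ → ℝ}

lemma IsEllipticSymbol.pos (hG : IsEllipticSymbol s G) {r : ℝ} (hr : 0 ≤ r) : 0 < G r := by
  obtain ⟨a, ha, hlower⟩ := hG.lower
  exact lt_of_lt_of_le (by positivity) (hlower r hr)

variable {E : Type*} [NormedAddCommGroup E]

/-- The complex-valued multiplier `G(‖ξ‖) ^ (-1/2)`. -/
def invSqrtSymbol (G : ℝ → ℝ) (ξ : E) : ℂ := ((√(G ‖ξ‖))⁻¹ : ℝ)

lemma IsEllipticSymbol.norm_invSqrtSymbol_sq_mul (hG : IsEllipticSymbol s G) (ξ : E) :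
    ‖invSqrtSymbol G ξ‖ ^ 2 * G ‖ξ‖ = 1 := by
  have hpos := hG.pos (norm_nonneg ξ)
  rw [invSqrtSymbol, Complex.norm_real, Real.norm_eq_abs, sq_abs, inv_pow, sq_sqrt hpos.le,
    inv_mul_cancel₀ hpos.ne']

lemma IsEllipticSymbol.invSqrtSymbol_ne_zero (hG : IsEllipticSymbol s G) (ξ : E) :
    invSqrtSymbol G ξ ≠ 0 := fun h ↦ by
  simpa [h] using hG.norm_invSqrtSymbol_sq_mul ξ

lemma IsEllipticSymbol.exists_norm_invSqrtSymbol_le (hG : IsEllipticSymbol s G) :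
    ∃ K : ℝ, 0 < K ∧ ∀ ξ : E, ‖invSqrtSymbol G ξ‖ ≤ K * (√(1 + ‖ξ‖ ^ 2)) ^ (-s) := by
  obtain ⟨a, ha, hlower⟩ := hG.lower
  refine ⟨(√a)⁻¹, by positivity, fun ξ ↦ ?_⟩
  have hsqrt : √((1 + ‖ξ‖ ^ 2) ^ s) = (√(1 + ‖ξ‖ ^ 2)) ^ s := by
    rw [sqrt_eq_rpow, sqrt_eq_rpow, ← rpow_mul (by positivity), ← rpow_mul (by positivity),
      mul_comm]
  rw [invSqrtSymbol, Complex.norm_real, Real.norm_of_nonneg (by positivity),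
    rpow_neg (sqrt_nonneg _), ← hsqrt, ← mul_inv, ← sqrt_mul ha.le]
  exact inv_anti₀ (by positivity) (sqrt_le_sqrt (hlower _ (norm_nonneg ξ)))

lemma IsEllipticSymbol.exists_norm_invSqrtSymbol_le_pow (hG : IsEllipticSymbol s G) :
    ∃ K : ℝ, 0 < K ∧ (∀ ξ : E, ‖invSqrtSymbol G ξ‖ ≤ K) ∧
      ∀ (j : ℕ) (ξ : E), 2 ^ j ≤ ‖ξ‖ → ‖invSqrtSymbol G ξ‖ ≤ K * (2 ^ (-s)) ^ j := by
  obtain ⟨K, hK, hbound⟩ := hG.exists_norm_invSqrtSymbol_le (E := E)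
  refine ⟨K, hK, fun ξ ↦ (hbound ξ).trans (mul_le_of_le_one_right hK.le ?_),
    fun j ξ hξ ↦ (hbound ξ).trans ?_⟩
  · exact rpow_le_one_of_one_le_of_nonpos (one_le_sqrt.2 (by simp)) (neg_nonpos.2 hG.order_pos.le)
  · rw [rpow_pow_comm zero_le_two]
    exact mul_le_mul_of_nonneg_left (rpow_le_rpow_of_nonpos (by positivity)
      (hξ.trans (le_sqrt_of_sq_le (by simp))) (neg_nonpos.2 hG.order_pos.le)) hK.le

variable [MeasurableSpace E] [BorelSpace E]

lemma IsEllipticSymbol.measurable_invSqrtSymbol (hG : IsEllipticSymbol s G) :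
    Measurable (invSqrtSymbol G : E → ℂ) :=
  Complex.measurable_ofReal.comp (hG.measurable.comp measurable_norm).sqrt.inv

variable [InnerProductSpace ℝ E] [FiniteDimensional ℝ E]

lemma IsEllipticSymbol.memLp_top_invSqrtSymbol (hG : IsEllipticSymbol s G) :
    MemLp (invSqrtSymbol G : E → ℂ) ∞ volume := by
  obtain ⟨K, -, hK, -⟩ := hG.exists_norm_invSqrtSymbol_le_pow (E := E)
  exact memLp_top_of_bound hG.measurable_invSqrtSymbol.aestronglyMeasurable K (ae_of_all _ hK)

/-- Multiplication by `G(‖ξ‖) ^ (-1/2)` on `L²`. It is inverse to `û ↦ G(‖ξ‖) ^ (1/2) û`, which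
turns the quadratic form with symbol `G` into the squared `L²` norm. -/
def divSqrtSymbol (hG : IsEllipticSymbol s G) : (E →₂[volume] ℂ) →L[ℂ] (E →₂[volume] ℂ) :=
  (ContinuousLinearMap.mul ℂ ℂ).holderL volume ∞ 2 2 (hG.memLp_top_invSqrtSymbol.toLp _)

lemma coeFn_divSqrtSymbol (hG : IsEllipticSymbol s G) (f : E →₂[volume] ℂ) :
    divSqrtSymbol hG f =ᵐ[volume] fun ξ ↦ invSqrtSymbol G ξ * f ξ := by
  filter_upwards [ContinuousLinearMap.coeFn_holder (r := 2) (ContinuousLinearMap.mul ℂ ℂ)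
    (hG.memLp_top_invSqrtSymbol.toLp (invSqrtSymbol G)) f, MemLp.coeFn_toLp
    hG.memLp_top_invSqrtSymbol] with ξ hmul hsymbol
  rw [← hsymbol]
  exact hmul

lemma norm_divSqrtSymbol_sq_mul (hG : IsEllipticSymbol s G) (f : E →₂[volume] ℂ) :
    (fun ξ ↦ ‖divSqrtSymbol hG f ξ‖ ^ 2 * G ‖ξ‖) =ᵐ[volume] fun ξ ↦ ‖f ξ‖ ^ 2 := by
  filter_upwards [coeFn_divSqrtSymbol hG f] with ξ hξ
  rw [hξ, norm_mul, mul_pow, mul_right_comm, hG.norm_invSqrtSymbol_sq_mul, one_mul]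

lemma injective_divSqrtSymbol (hG : IsEllipticSymbol s G) :
    Function.Injective (divSqrtSymbol hG : (E →₂[volume] ℂ) → (E →₂[volume] ℂ)) := by
  refine fun f g hfg ↦ Lp.ext ?_
  filter_upwards [coeFn_divSqrtSymbol hG f, coeFn_divSqrtSymbol hG g] with ξ hf hg
  exact mul_left_cancel₀ (hG.invSqrtSymbol_ne_zero ξ) (by rw [← hf, ← hg, hfg])

lemma fourierInv_divSqrtSymbol_ae_eq_zero_iff (hG : IsEllipticSymbol s G) {f : E →₂[volume] ℂ} :
    (𝓕⁻ (divSqrtSymbol hG f) : E →₂[volume] ℂ) =ᵐ[volume] 0 ↔ f = 0 := by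
  rw [← Lp.eq_zero_iff_ae_eq_zero]
  exact map_eq_zero_iff ((Lp.fourierTransformₗᵢ E ℂ).symm.toLinearMap ∘ₗ
      (divSqrtSymbol hG).toLinearMap)
    ((Lp.fourierTransformₗᵢ E ℂ).symm.injective.comp (injective_divSqrtSymbol hG))

lemma divSqrtSymbol_mem_invariantL2 (hG : IsEllipticSymbol s G) {Γ : Set (E ≃ₗᵢ[ℝ] E)}
    {f : E →₂[volume] ℂ} (hf : f ∈ invariantL2 Γ) : divSqrtSymbol hG f ∈ invariantL2 Γ := by
  refine mem_invariantL2.2 fun A hA ↦ ?_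
  have hmul := coeFn_divSqrtSymbol hG f
  filter_upwards [mem_invariantL2.1 hf A hA, hmul,
    A.measurePreserving.quasiMeasurePreserving.ae_eq_comp hmul] with ξ hinv hξ hAξ
  rw [hAξ, hξ, ← hinv]
  simp [invSqrtSymbol]

lemma exists_forall_eLpNorm_tail_divSqrtSymbol_le (hG : IsEllipticSymbol s G) :
    ∃ K : ℝ, ∀ (f : E →₂[volume] ℂ) (j : ℕ),
      eLpNorm ((Metric.ball 0 (2 ^ j))ᶜ.indicator (divSqrtSymbol hG f)) 2 volume ≤
        ENNReal.ofReal (K * ‖f‖) * ENNReal.ofReal (2 ^ (-s)) ^ j := by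
  obtain ⟨K, hK, -, hdecay⟩ := hG.exists_norm_invSqrtSymbol_le_pow (E := E)
  refine ⟨K, fun f j ↦ ?_⟩
  have hle : ∀ᵐ ξ ∂(volume : Measure E), ‖(Metric.ball 0 (2 ^ j))ᶜ.indicator
      (divSqrtSymbol hG f) ξ‖ ≤ K * (2 ^ (-s)) ^ j * ‖f ξ‖ := by
    filter_upwards [coeFn_divSqrtSymbol hG f] with ξ hξ
    by_cases hmem : ξ ∈ Metric.ball 0 (2 ^ j)
    · rw [Set.indicator_of_notMem (by simpa using hmem), norm_zero]
      positivity
    · rw [Set.indicator_of_mem hmem, hξ, norm_mul]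
      gcongr
      exact hdecay j ξ (by simpa using hmem)
  refine (eLpNorm_le_mul_eLpNorm_of_ae_le_mul hle 2).trans_eq ?_
  rw [ENNReal.ofReal_mul hK.le, ENNReal.ofReal_mul hK.le, ENNReal.ofReal_pow (by positivity),
    ← Lp.enorm_def, ofReal_norm]
  ring

lemma ofReal_two_rpow_neg_lt_one (hs : 0 < s) : ENNReal.ofReal (2 ^ (-s)) < 1 := by
  rw [ENNReal.ofReal_lt_one]
  exact rpow_lt_one_of_one_lt_of_neg one_lt_two (by simpa using hs)

lemma sobolevRatio_lt_one {d : ℕ} {p : ℝ} (hp : 2 ≤ p) (hsp : d * (1 / 2 - 1 / p) < s) :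
    sobolevRatio d p (ENNReal.ofReal (2 ^ (-s))) < 1 := by
  have hα : 0 ≤ 1 / 2 - 1 / p := sub_nonneg.2 (one_div_le_one_div_of_le two_pos hp)
  have heq : sobolevRatio d p (ENNReal.ofReal (2 ^ (-s))) =
      ENNReal.ofReal (2 ^ (d * (1 / 2 - 1 / p) - s)) := by
    rw [sobolevRatio, sub_eq_add_neg (_ * _), rpow_add two_pos, rpow_mul zero_le_two, rpow_natCast,
      ENNReal.ofReal_mul (by positivity), ← ENNReal.ofReal_rpow_of_nonneg (by positivity) hα,
      ENNReal.ofReal_pow zero_le_two, ENNReal.ofReal_ofNat]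
  rw [heq, ENNReal.ofReal_lt_one]
  exact rpow_lt_one_of_one_lt_of_neg one_lt_two (sub_neg.2 hsp)

section Maximizer

lemma memLp_fourierInv_divSqrtSymbol (hG : IsEllipticSymbol s G) {p : ℝ} (hp : 2 ≤ p)
    (hsp : Module.finrank ℝ E * (1 / 2 - 1 / p) < s) (f : E →₂[volume] ℂ) :
    MemLp (𝓕⁻ (divSqrtSymbol hG f) : E →₂[volume] ℂ) (ENNReal.ofReal p) volume :=
  have ⟨_, hK⟩ := exists_forall_eLpNorm_tail_divSqrtSymbol_le (E := E) hG
  memLp_fourierInv hp _ ENNReal.ofReal_ne_top (ofReal_two_rpow_neg_lt_one hG.order_pos)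
    (sobolevRatio_lt_one hp hsp) (hK f)

variable (hG : IsEllipticSymbol s G) {p : ℝ} (hp : 2 ≤ p)
  (hsp : Module.finrank ℝ E * (1 / 2 - 1 / p) < s)

/-- The seminorm `f ↦ ‖𝓕⁻ (G(‖ξ‖) ^ (-1/2) f)‖_{L^p}` on `L²`. -/
def symbolSeminorm : Seminorm ℂ (E →₂[volume] ℂ) :=
  Seminorm.of
    (fun f ↦ (eLpNorm (𝓕⁻ (divSqrtSymbol hG f) : E →₂[volume] ℂ) (ENNReal.ofReal p) volume).toReal)
    (fun f g ↦ by
      have hf := memLp_fourierInv_divSqrtSymbol hG hp hsp f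
      have hg := memLp_fourierInv_divSqrtSymbol hG hp hsp g
      rw [map_add, FourierTransform.fourierInv_add, eLpNorm_congr_ae (Lp.coeFn_add _ _),
        ← ENNReal.toReal_add hf.2.ne hg.2.ne]
      exact ENNReal.toReal_mono (ENNReal.add_ne_top.2 ⟨hf.2.ne, hg.2.ne⟩)
        (eLpNorm_add_le hf.1 hg.1 (ENNReal.one_le_ofReal.2 (by linarith))))
    (fun c f ↦ by
      rw [map_smul, FourierTransform.fourierInv_smul, eLpNorm_congr_ae (Lp.coeFn_smul _ _),
        eLpNorm_const_smul, ENNReal.toReal_mul, toReal_enorm])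

lemma symbolSeminorm_apply (f : E →₂[volume] ℂ) : symbolSeminorm hG hp hsp f =
    (eLpNorm (𝓕⁻ (divSqrtSymbol hG f) : E →₂[volume] ℂ) (ENNReal.ofReal p) volume).toReal :=
  rfl

lemma symbolSeminorm_pos {f : E →₂[volume] ℂ} (hf : f ≠ 0) : 0 < symbolSeminorm hG hp hsp f := by
  have hmem := memLp_fourierInv_divSqrtSymbol hG hp hsp f
  refine ENNReal.toReal_pos (fun h0 ↦ hf ?_) hmem.2.ne
  rwa [eLpNorm_eq_zero_iff hmem.1 (by simpa using by linarith),
    fourierInv_divSqrtSymbol_ae_eq_zero_iff] at h0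

lemma isCompletelyContinuous_symbolSeminorm {Γ : Set (E ≃ₗᵢ[ℝ] E)} (hΓ : HasWideOrbits Γ)
    (hp : 2 < p) : IsCompletelyContinuous
      ((symbolSeminorm hG hp.le hsp).comp (invariantL2 Γ).subtype) := by
  intro l hl
  obtain ⟨K, hK⟩ := exists_forall_eLpNorm_tail_divSqrtSymbol_le (E := E) hG
  obtain ⟨B, -, hB⟩ := hl.exists_bound
  have hlim := tendsto_eLpNorm_fourierInv hΓ
    (fun f ↦ divSqrtSymbol_mem_invariantL2 hG f.2)
    (hl.map (divSqrtSymbol hG ∘L (invariantL2 Γ).subtypeL)) hp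
    (B := ENNReal.ofReal (|K| * B)) ENNReal.ofReal_ne_top (ofReal_two_rpow_neg_lt_one hG.order_pos)
    (sobolevRatio_lt_one hp.le hsp) ?_
  · exact (ENNReal.tendsto_toReal ENNReal.zero_ne_top).comp hlim
  · filter_upwards [hB] with f hf j
    refine (hK f j).trans ?_
    gcongr
    exacts [le_abs_self K, hf]

lemma exists_ne_zero_invariantL2 (Γ : Set (E ≃ₗᵢ[ℝ] E)) : ∃ f : invariantL2 Γ, f ≠ 0 := by
  have hmem : MemLp ((Metric.ball (0 : E) 1).indicator fun _ ↦ (1 : ℂ)) 2 volume :=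
    memLp_indicator_const 2 measurableSet_ball 1 (Or.inr measure_ball_lt_top.ne)
  refine ⟨⟨_, toLp_mem_invariantL2 hmem fun A _ ↦ ae_of_all _ fun ξ ↦ ?_⟩, fun h ↦ ?_⟩
  · by_cases hξ : ξ ∈ Metric.ball 0 1 <;> simp_all
  · have hzero := hmem.coeFn_toLp.symm.trans
      (Lp.eq_zero_iff_ae_eq_zero.1 (congrArg Subtype.val h))
    rw [Set.indicator_ae_eq_zero, Function.support_const one_ne_zero, Set.inter_univ] at hzero
    exact (Metric.measure_ball_pos volume (0 : E) one_pos).ne' hzero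

lemma exists_maximizer_symbolSeminorm {Γ : Set (E ≃ₗᵢ[ℝ] E)} (hΓ : HasWideOrbits Γ)
    (hp : 2 < p) : ∃ f ∈ invariantL2 Γ, f ≠ 0 ∧ ∀ g ∈ invariantL2 Γ,
      symbolSeminorm hG hp.le hsp g * ‖f‖ ≤ symbolSeminorm hG hp.le hsp f * ‖g‖ := by
  obtain ⟨h, hh⟩ := exists_ne_zero_invariantL2 Γ
  have hne : (symbolSeminorm hG hp.le hsp).comp (invariantL2 Γ).subtype ≠ 0 := fun h0 ↦
    (symbolSeminorm_pos hG hp.le hsp (f := h) (by simpa using hh)).ne'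
      (by simpa using DFunLike.congr_fun h0 h)
  obtain ⟨f, hf, hmax⟩ :=
    (isCompletelyContinuous_symbolSeminorm hG hsp hΓ hp).exists_maximizer hne
  exact ⟨f, f.2, by simpa using hf, fun g hg ↦ hmax ⟨g, hg⟩⟩

end Maximizer

end EllipticSymbol

section Rayleigh

lemma L2_norm_sq_eq_integral {α : Type*} [MeasurableSpace α] {μ : Measure α} (f : α →₂[μ] ℂ) :
    ‖f‖ ^ 2 = ∫ x, ‖f x‖ ^ 2 ∂μ := by
  rw [← inner_self_eq_norm_sq (𝕜 := ℂ), L2.inner_def]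
  simp only [inner_self_eq_norm_sq_to_K, ← RCLike.ofReal_pow, integral_ofReal, RCLike.ofReal_re]

variable {d : ℕ} {s : ℝ} {G : ℝ → ℝ} {Γ : Set (Rd d ≃ₗᵢ[ℝ] Rd d)}

lemma isFT_of_ae_eq_fourierInv {U : Rd d →₂[volume] ℂ} {u : Rd d → ℂ}
    (hu : u =ᵐ[volume] (𝓕⁻ U : Rd d →₂[volume] ℂ)) : IsFT U u := by
  intro φ
  have hpair := integral_fourier_mul_schwartz (𝓕⁻ U : Rd d →₂[volume] ℂ) φ
  rw [FourierTransform.fourier_fourierInv_eq] at hpair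
  exact hpair.trans (integral_congr_ae (hu.mono fun x hx ↦ by simp only [hx]))

lemma IsFT.fourier_toLp_eq {U u : Rd d → ℂ} (h : IsFT U u) (hU : MemLp U 2 volume)
    (hu : MemLp u 2 volume) : 𝓕 (hu.toLp u) = hU.toLp U := by
  refine Lp.ext (EventuallyEq.trans ?_ hU.coeFn_toLp.symm)
  refine ae_eq_of_forall_integral_mul_schwartz_eq
    ((Lp.memLp _).locallyIntegrable one_le_two) (hU.locallyIntegrable one_le_two) fun φ ↦ ?_
  rw [integral_fourier_mul_schwartz, h φ]
  exact integral_congr_ae (hu.coeFn_toLp.mono fun x hx ↦ by simp only [hx])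

lemma IsFT.comp_isometry_ae_eq {U u : Rd d → ℂ} (h : IsFT U u) (hU : MemLp U 2 volume)
    {A : Rd d ≃ₗᵢ[ℝ] Rd d} (hu : ∀ x, u (A x) = u x) : U ∘ A =ᵐ[volume] U := by
  refine ae_eq_of_forall_integral_mul_schwartz_eq
    ((hU.comp_measurePreserving A.measurePreserving).locallyIntegrable one_le_two)
    (hU.locallyIntegrable one_le_two) fun φ ↦ ?_
  let ψ : SchwartzMap (Rd d) ℂ :=
    SchwartzMap.compCLMOfContinuousLinearEquiv ℂ A.symm.toContinuousLinearEquiv φ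
  have hψ : ⇑ψ = ⇑φ ∘ A.symm := rfl
  have hcv (F : Rd d → ℂ) : ∫ x, F (A x) = ∫ x, F x :=
    A.measurePreserving.integral_comp A.toHomeomorph.measurableEmbedding F
  calc ∫ ξ, U (A ξ) * φ ξ = ∫ ξ, U ξ * ψ ξ := by
        rw [← hcv fun ξ ↦ U ξ * ψ ξ]
        simp [hψ]
    _ = ∫ x, u x * 𝓕 (⇑ψ) x := h ψ
    _ = ∫ x, u x * 𝓕 (⇑φ) x := by
        rw [← hcv fun x ↦ u x * 𝓕 (⇑ψ) x]
        simp [hψ, fourier_comp_linearIsometry, hu]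
    _ = ∫ ξ, U ξ * φ ξ := (h φ).symm

lemma exists_hsFn_of_mem_invariantL2 (hG : IsEllipticSymbol s G) {f : Rd d →₂[volume] ℂ}
    (hf : f ∈ invariantL2 Γ) : ∃ u : HsFn d s, InvariantUnder Γ u.toFun ∧
      u.toFun =ᵐ[volume] (𝓕⁻ (divSqrtSymbol hG f) : Rd d →₂[volume] ℂ) ∧ qeps G u = ‖f‖ ^ 2 := by
  obtain ⟨K, hK⟩ := exists_forall_eLpNorm_tail_divSqrtSymbol_le (E := Rd d) hG
  obtain ⟨v, hvinv, hv⟩ := exists_invariantUnder_ae_eq_fourierInv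
    (divSqrtSymbol_mem_invariantL2 hG hf) ENNReal.ofReal_ne_top
    (ofReal_two_rpow_neg_lt_one hG.order_pos) (hK f)
  obtain ⟨a, ha, hlower⟩ := hG.lower
  have hsq := norm_divSqrtSymbol_sq_mul hG f
  have hHs : Integrable fun ξ ↦ ‖divSqrtSymbol hG f ξ‖ ^ 2 * (1 + ‖ξ‖ ^ 2) ^ s := by
    refine ((Lp.memLp f).integrable_norm_pow two_ne_zero |>.const_mul a⁻¹).mono' ?_ ?_
    · exact ((Lp.aestronglyMeasurable _).norm.pow 2).mul
        (Measurable.aestronglyMeasurable (by fun_prop))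
    · filter_upwards [hsq] with ξ hξ
      rw [Real.norm_of_nonneg (by positivity), ← hξ, mul_left_comm]
      gcongr
      exact (le_inv_mul_iff₀ ha).2 (hlower _ (norm_nonneg ξ))
  exact ⟨⟨v, divSqrtSymbol hG f, (memLp_congr_ae hv).2 (Lp.memLp _), Lp.memLp _,
    isFT_of_ae_eq_fourierInv hv, hHs⟩, hvinv, hv,
    (integral_congr_ae hsq).trans (L2_norm_sq_eq_integral f).symm⟩

lemma norm_sqrt_mul_sq {t : ℝ} (ht : 0 ≤ t) (z : ℂ) : ‖(√t : ℂ) * z‖ ^ 2 = ‖z‖ ^ 2 * t := by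
  rw [norm_mul, mul_pow, Complex.norm_real, Real.norm_eq_abs, sq_abs, sq_sqrt ht, mul_comm]

lemma memLp_sqrt_symbol_mul_ft (hG : IsEllipticSymbol s G) (u : HsFn d s) :
    MemLp (fun ξ ↦ (√(G ‖ξ‖) : ℂ) * u.ft ξ) 2 volume := by
  obtain ⟨b, hupper⟩ := hG.upper
  have hmeas : AEStronglyMeasurable (fun ξ : Rd d ↦ (√(G ‖ξ‖) : ℂ) * u.ft ξ) volume :=
    (Complex.measurable_ofReal.comp
      (hG.measurable.comp measurable_norm).sqrt).aestronglyMeasurable.mul u.ft_memL2.1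
  rw [memLp_two_iff_integrable_sq_norm hmeas]
  refine (u.memHs.const_mul b).mono' (hmeas.norm.pow 2) (ae_of_all _ fun ξ ↦ ?_)
  rw [Real.norm_of_nonneg (by positivity), norm_sqrt_mul_sq (hG.pos (norm_nonneg ξ)).le,
    mul_left_comm]
  gcongr
  exact hupper _ (norm_nonneg ξ)

lemma exists_mem_invariantL2_of_hsFn (hG : IsEllipticSymbol s G) {u : HsFn d s}
    (hu : InvariantUnder Γ u.toFun) : ∃ f ∈ invariantL2 Γ,
      u.toFun =ᵐ[volume] (𝓕⁻ (divSqrtSymbol hG f) : Rd d →₂[volume] ℂ) ∧ qeps G u = ‖f‖ ^ 2 := by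
  have hmem := memLp_sqrt_symbol_mul_ft hG u
  have hinv : ∀ A ∈ Γ, (fun ξ ↦ (√(G ‖ξ‖) : ℂ) * u.ft ξ) ∘ A =ᵐ[volume]
      fun ξ ↦ (√(G ‖ξ‖) : ℂ) * u.ft ξ := fun A hA ↦ by
    filter_upwards [u.isFT.comp_isometry_ae_eq u.ft_memL2 (hu A hA)] with ξ hξ
    simp_all
  have hft : divSqrtSymbol hG (hmem.toLp _) = u.ft_memL2.toLp u.ft := by
    refine Lp.ext ?_
    filter_upwards [coeFn_divSqrtSymbol hG (hmem.toLp _), hmem.coeFn_toLp,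
      u.ft_memL2.coeFn_toLp] with ξ hdiv hmul hξ
    have hne : (√(G ‖ξ‖) : ℂ) ≠ 0 :=
      Complex.ofReal_ne_zero.2 (sqrt_pos.2 (hG.pos (norm_nonneg ξ))).ne'
    rw [hdiv, hmul, hξ, invSqrtSymbol, Complex.ofReal_inv, inv_mul_cancel_left₀ hne]
  refine ⟨hmem.toLp _, toLp_mem_invariantL2 hmem hinv, ?_, ?_⟩
  · rw [hft, ← u.isFT.fourier_toLp_eq u.ft_memL2 u.memL2, FourierTransform.fourierInv_fourier_eq]
    exact u.memL2.coeFn_toLp.symm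
  · rw [L2_norm_sq_eq_integral]
    refine integral_congr_ae (hmem.coeFn_toLp.mono fun ξ hξ ↦ ?_)
    simp only [hξ, norm_sqrt_mul_sq (hG.pos (norm_nonneg ξ)).le]

lemma qeps_div_LpN_sq_eq (hG : IsEllipticSymbol s G) {p : ℝ} (hp : 2 ≤ p)
    (hsp : Module.finrank ℝ (Rd d) * (1 / 2 - 1 / p) < s) {u : HsFn d s} {f : Rd d →₂[volume] ℂ}
    (hu : u.toFun =ᵐ[volume] (𝓕⁻ (divSqrtSymbol hG f) : Rd d →₂[volume] ℂ))
    (huq : qeps G u = ‖f‖ ^ 2) :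
    qeps G u / LpN p u.toFun ^ 2 = (‖f‖ / symbolSeminorm hG hp hsp f) ^ 2 := by
  rw [LpN, eLpNorm_congr_ae hu, ← symbolSeminorm_apply hG hp hsp, huq, div_pow]

lemma attained_invariantUnder (hG : IsEllipticSymbol s G) {p : ℝ} (hp : 2 < p)
    (hsp : d * (1 / 2 - 1 / p) < s) (hΓ : HasWideOrbits Γ) :
    Attained d s p G (InvariantUnder Γ) := by
  replace hsp : Module.finrank ℝ (Rd d) * (1 / 2 - 1 / p) < s := by simpa using hsp
  obtain ⟨f, hfinv, hf0, hmax⟩ := exists_maximizer_symbolSeminorm hG hsp hΓ hp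
  obtain ⟨u, huinv, hu, huq⟩ := exists_hsFn_of_mem_invariantL2 hG hfinv
  have hu0 : ¬ u.toFun =ᵐ[volume] fun _ ↦ 0 := fun h0 ↦
    hf0 ((fourierInv_divSqrtSymbol_ae_eq_zero_iff hG).1 (hu.symm.trans h0))
  have hup := (memLp_congr_ae hu).2 (memLp_fourierInv_divSqrtSymbol hG hp.le hsp f)
  have hleast : IsLeast (RayleighSet d s p G (InvariantUnder Γ))
      (qeps G u / LpN p u.toFun ^ 2) := by
    refine ⟨⟨u, huinv, hu0, hup, rfl⟩, ?_⟩
    rintro _ ⟨w, hwinv, hw0, -, rfl⟩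
    obtain ⟨h, hhinv, hw, hwq⟩ := exists_mem_invariantL2_of_hsFn hG hwinv
    have hh0 : h ≠ 0 := fun h0 ↦
      hw0 (hw.trans ((fourierInv_divSqrtSymbol_ae_eq_zero_iff hG).2 h0))
    rw [qeps_div_LpN_sq_eq hG hp.le hsp hu huq, qeps_div_LpN_sq_eq hG hp.le hsp hw hwq]
    gcongr ?_ ^ 2
    rw [div_le_div_iff₀ (symbolSeminorm_pos hG hp.le hsp hf0)
      (symbolSeminorm_pos hG hp.le hsp hh0), mul_comm, mul_comm ‖h‖]
    exact hmax h hhinv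
  exact ⟨u, huinv, hu0, hup, hleast.csInf_eq.symm⟩

end Rayleigh

section SplittingGroup

variable {E : Type*} [NormedAddCommGroup E] [InnerProductSpace ℝ E]

section Transitivity

variable {V : Submodule ℝ E} [V.HasOrthogonalProjection]

/-- The linear isometries preserving the orthogonal splitting `E = V ⊕ Vᗮ`, which is the group
`O(V) × O(Vᗮ)`; preserving the splitting is encoded as commuting with the projection onto `V`. -/
def splittingGroup (V : Submodule ℝ E) [V.HasOrthogonalProjection] : Set (E ≃ₗᵢ[ℝ] E) :=
  {A | ∀ x, V.starProjection (A x) = A (V.starProjection x)}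

lemma norm_starProjection_apply_of_mem_splittingGroup {A : E ≃ₗᵢ[ℝ] E}
    (hA : A ∈ splittingGroup V) (x : E) : ‖V.starProjection (A x)‖ = ‖V.starProjection x‖ := by
  rw [hA x, A.norm_map]

lemma trans_mem_splittingGroup {A B : E ≃ₗᵢ[ℝ] E} (hA : A ∈ splittingGroup V)
    (hB : B ∈ splittingGroup V) : A.trans B ∈ splittingGroup V := fun x ↦ by
  rw [LinearIsometryEquiv.trans_apply, hB, hA, LinearIsometryEquiv.trans_apply]

lemma reflection_mem_splittingGroup {a : E} {c : ℝ} (ha : V.starProjection a = c • a) :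
    (ℝ ∙ a)ᗮ.reflection ∈ splittingGroup V := fun x ↦ by
  have hinner : inner ℝ a (V.starProjection x) = c * inner ℝ a x := by
    rw [← Submodule.inner_starProjection_left_eq_right, ha, real_inner_smul_left]
  simp only [Submodule.reflection_orthogonal_apply, Submodule.reflection_singleton_apply, hinner,
    map_neg, map_sub, map_nsmul, map_smul, ha]
  module

lemma reflection_mem_splittingGroup_of_mem {a : E} (ha : a ∈ V) :
    (ℝ ∙ a)ᗮ.reflection ∈ splittingGroup V :=
  reflection_mem_splittingGroup (c := 1) <| by
    rw [one_smul, Submodule.starProjection_eq_self_iff.2 ha]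

lemma reflection_mem_splittingGroup_of_mem_orthogonal {a : E} (ha : a ∈ Vᗮ) :
    (ℝ ∙ a)ᗮ.reflection ∈ splittingGroup V :=
  reflection_mem_splittingGroup (c := 0) <| by
    rw [zero_smul, V.starProjection_apply_eq_zero_iff.2 ha]

lemma reflection_orthogonal_singleton_eq_self {a z : E} (h : inner ℝ a z = 0) :
    (ℝ ∙ a)ᗮ.reflection z = z :=
  Submodule.reflection_mem_subspace_eq_self (Submodule.mem_orthogonal_singleton_iff_inner_right.2 h)

lemma norm_starProjection_orthogonal_eq {x y : E}
    (hV : ‖V.starProjection x‖ = ‖V.starProjection y‖) (hxy : ‖x‖ = ‖y‖) :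
    ‖Vᗮ.starProjection x‖ = ‖Vᗮ.starProjection y‖ := by
  have hx := Submodule.norm_sq_eq_add_norm_sq_starProjection x V
  have hy := Submodule.norm_sq_eq_add_norm_sq_starProjection y V
  rw [← sq_eq_sq₀ (norm_nonneg _) (norm_nonneg _)]
  rw [hV, hxy] at hx
  linarith

lemma exists_mem_splittingGroup_apply_eq {x y : E}
    (hV : ‖V.starProjection x‖ = ‖V.starProjection y‖) (hxy : ‖x‖ = ‖y‖) :
    ∃ A ∈ splittingGroup V, A x = y := by
  set a := V.starProjection x - V.starProjection y
  set b := Vᗮ.starProjection x - Vᗮ.starProjection y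
  have ha : a ∈ V := sub_mem (V.starProjection_apply_mem x) (V.starProjection_apply_mem y)
  have hb : b ∈ Vᗮ := sub_mem (Vᗮ.starProjection_apply_mem x) (Vᗮ.starProjection_apply_mem y)
  refine ⟨_, trans_mem_splittingGroup (reflection_mem_splittingGroup_of_mem ha)
    (reflection_mem_splittingGroup_of_mem_orthogonal hb), ?_⟩
  rw [LinearIsometryEquiv.trans_apply]
  calc (ℝ ∙ b)ᗮ.reflection ((ℝ ∙ a)ᗮ.reflection x)
      = (ℝ ∙ b)ᗮ.reflection ((ℝ ∙ a)ᗮ.reflection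
          (V.starProjection x + Vᗮ.starProjection x)) := by
        rw [V.starProjection_add_starProjection_orthogonal]
    _ = (ℝ ∙ b)ᗮ.reflection (V.starProjection y + Vᗮ.starProjection x) := by
        rw [map_add, Submodule.reflection_sub hV, reflection_orthogonal_singleton_eq_self
          (Submodule.inner_right_of_mem_orthogonal ha (Vᗮ.starProjection_apply_mem x))]
    _ = V.starProjection y + Vᗮ.starProjection y := by
        rw [map_add, Submodule.reflection_sub (norm_starProjection_orthogonal_eq hV hxy),
          reflection_orthogonal_singleton_eq_self
          (Submodule.inner_left_of_mem_orthogonal (V.starProjection_apply_mem y) hb)]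
    _ = y := V.starProjection_add_starProjection_orthogonal y

lemma invariantUnder_splittingGroup_iff {u : E → ℂ} :
    InvariantUnder (splittingGroup V) u ↔
      ∀ x y, ‖V.starProjection x‖ = ‖V.starProjection y‖ → ‖x‖ = ‖y‖ → u x = u y := by
  refine ⟨fun h x y hV hxy ↦ ?_, fun h A hA x ↦
    h _ _ (norm_starProjection_apply_of_mem_splittingGroup hA x) (A.norm_map x)⟩
  obtain ⟨A, hA, rfl⟩ := exists_mem_splittingGroup_apply_eq hV hxy
  exact (h A hA x).symm

end Transitivity

section WideOrbits

lemma norm_sq_smul_add_smul {v w : E} (hnorm : ‖w‖ = ‖v‖) (hinner : inner ℝ v w = 0) (c t : ℝ) :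
    ‖c • v + t • w‖ ^ 2 = (c ^ 2 + t ^ 2) * ‖v‖ ^ 2 := by
  rw [norm_add_sq_real, real_inner_smul_left, real_inner_smul_right, hinner, norm_smul, norm_smul,
    hnorm, mul_pow, mul_pow, norm_eq_abs, norm_eq_abs, sq_abs, sq_abs]
  ring

lemma exists_norm_eq_and_inner_eq_zero (hE : Module.finrank ℝ E ≠ 1) (v : E) :
    ∃ w : E, ‖w‖ = ‖v‖ ∧ inner ℝ v w = 0 := by
  rcases eq_or_ne v 0 with rfl | hv
  · exact ⟨0, rfl, inner_zero_left _⟩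
  have hperp : (ℝ ∙ v)ᗮ ≠ ⊥ := fun h ↦ hE <| by
    rw [← finrank_top ℝ E, ← (Submodule.orthogonal_eq_bot_iff).1 h, finrank_span_singleton hv]
  obtain ⟨w, hw, hw0⟩ := Submodule.exists_mem_ne_zero_of_ne_bot hperp
  refine ⟨(‖v‖ / ‖w‖) • w, ?_, ?_⟩
  · rw [norm_smul, norm_div, norm_norm, norm_norm, div_mul_cancel₀ _ (norm_ne_zero_iff.2 hw0)]
  · rw [real_inner_smul_right, Submodule.mem_orthogonal_singleton_iff_inner_right.1 hw, mul_zero]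

variable {V : Submodule ℝ E} [V.HasOrthogonalProjection]

lemma exists_forall_norm_smul_add_smul (hV : Module.finrank ℝ V ≠ 1)
    (hV' : Module.finrank ℝ Vᗮ ≠ 1) (x : E) : ∃ w : E, ∀ c t : ℝ,
      ‖V.starProjection (c • x + t • w)‖ ^ 2 = (c ^ 2 + t ^ 2) * ‖V.starProjection x‖ ^ 2 ∧
      ‖c • x + t • w‖ ^ 2 = (c ^ 2 + t ^ 2) * ‖x‖ ^ 2 := by
  obtain ⟨⟨v, hv⟩, hvnorm, hvinner⟩ :=
    exists_norm_eq_and_inner_eq_zero hV ⟨_, V.starProjection_apply_mem x⟩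
  obtain ⟨⟨v', hv'⟩, hvnorm', hvinner'⟩ :=
    exists_norm_eq_and_inner_eq_zero hV' ⟨_, Vᗮ.starProjection_apply_mem x⟩
  have hproj (c t : ℝ) :
      V.starProjection (c • x + t • (v + v')) = c • V.starProjection x + t • v := by
    rw [map_add, map_smul, map_smul, map_add, Submodule.starProjection_eq_self_iff.2 hv,
      V.starProjection_apply_eq_zero_iff.2 hv', add_zero]
  have hproj' (c t : ℝ) :
      Vᗮ.starProjection (c • x + t • (v + v')) = c • Vᗮ.starProjection x + t • v' := by
    rw [map_add, map_smul, map_smul, map_add, Submodule.starProjection_eq_self_iff.2 hv',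
      Submodule.starProjection_orthogonal_apply_eq_zero hv, zero_add]
  have hnorm (c t : ℝ) := norm_sq_smul_add_smul hvnorm hvinner c t
  have hnorm' (c t : ℝ) := norm_sq_smul_add_smul hvnorm' hvinner' c t
  refine ⟨v + v', fun c t ↦ ⟨by rw [hproj]; exact hnorm c t, ?_⟩⟩
  rw [Submodule.norm_sq_eq_add_norm_sq_starProjection _ V, hproj, hproj',
    Submodule.norm_sq_eq_add_norm_sq_starProjection x V, mul_add]
  exact congrArg₂ _ (hnorm c t) (hnorm' c t)

lemma exists_sq_add_sq_eq_one_and_pairwise (N : ℕ) : ∃ c t : Fin N → ℝ,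
    (∀ i, c i ^ 2 + t i ^ 2 = 1) ∧ Pairwise fun i j ↦ 1 / (N : ℝ) ≤ |c i - c j| := by
  refine ⟨fun i ↦ i / N, fun i ↦ √(1 - (i / N) ^ 2), fun i ↦ ?_, fun i j hij ↦ ?_⟩
  · have hle : (i / N : ℝ) ≤ 1 :=
      div_le_one_of_le₀ (by exact_mod_cast i.2.le) (Nat.cast_nonneg N)
    rw [sq_sqrt (sub_nonneg.2 (pow_le_one₀ (by positivity) hle)), add_sub_cancel]
  · have hint : (1 : ℤ) ≤ |(i : ℤ) - j| :=
      Int.one_le_abs (sub_ne_zero.2 (by exact_mod_cast Fin.val_ne_of_ne hij))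
    beta_reduce
    rw [← sub_div, abs_div, Nat.abs_cast]
    gcongr
    exact_mod_cast hint

lemma hasWideOrbits_splittingGroup (hV : Module.finrank ℝ V ≠ 1)
    (hV' : Module.finrank ℝ Vᗮ ≠ 1) : HasWideOrbits (splittingGroup V) := by
  intro N R
  obtain ⟨c, t, hct, hsep⟩ := exists_sq_add_sq_eq_one_and_pairwise N
  refine ⟨N * |R|, fun x hx ↦ ?_⟩
  obtain ⟨w, hw⟩ := exists_forall_norm_smul_add_smul hV hV' x
  have horbit (i : Fin N) : ∃ A ∈ splittingGroup V, A x = c i • x + t i • w := by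
    obtain ⟨hproj, hnorm⟩ := hw (c i) (t i)
    rw [hct i, one_mul, sq_eq_sq₀ (norm_nonneg _) (norm_nonneg _)] at hproj hnorm
    exact exists_mem_splittingGroup_apply_eq hproj.symm hnorm.symm
  choose A hA hAx using horbit
  refine ⟨A, hA, fun i j hij ↦ ?_⟩
  have hN : (0 : ℝ) < N := Nat.cast_pos.2 i.pos
  have hdiff : A i x - A j x = (c i - c j) • x + (t i - t j) • w := by
    rw [hAx, hAx]; module
  have hsq : (|c i - c j| * ‖x‖) ^ 2 ≤ ‖A i x - A j x‖ ^ 2 := by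
    rw [hdiff, (hw _ _).2, mul_pow, sq_abs]
    gcongr
    exact le_add_of_nonneg_right (sq_nonneg _)
  calc R ≤ |R| := le_abs_self R
    _ = 1 / N * (N * |R|) := by field_simp
    _ ≤ |c i - c j| * ‖x‖ := by gcongr; exact hsep hij
    _ ≤ ‖A i x - A j x‖ := le_of_sq_le_sq hsq (norm_nonneg _)
    _ = dist (A i x) (A j x) := (dist_eq_norm _ _).symm

end WideOrbits

section CoordinateBlocks

/-- The first block `ℝ^{d-k}` of `ℝ^d = ℝ^{d-k} × ℝ^k`. -/
def firstBlock (d k : ℕ) : Submodule ℝ (Rd d) :=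
  Submodule.span ℝ (Set.range fun i : {i : Fin d // (i : ℕ) < d - k} ↦
    EuclideanSpace.single i.1 (1 : ℝ))

variable {d k : ℕ}

lemma finrank_firstBlock : Module.finrank ℝ (firstBlock d k) = d - k := by
  have hli : LinearIndependent ℝ fun i : {i : Fin d // (i : ℕ) < d - k} ↦
      EuclideanSpace.single i.1 (1 : ℝ) :=
    (EuclideanSpace.orthonormal_single.linearIndependent).comp _ Subtype.val_injective
  rw [firstBlock, finrank_span_eq_card hli, Fintype.card_subtype, Fin.card_filter_val_lt,
    min_eq_right (Nat.sub_le d k)]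

lemma finrank_firstBlock_orthogonal (hk : k ≤ d) : Module.finrank ℝ (firstBlock d k)ᗮ = k := by
  have h := (firstBlock d k).finrank_add_finrank_orthogonal
  rw [finrank_firstBlock, finrank_euclideanSpace_fin] at h
  omega

lemma starProjection_firstBlock_single (i : Fin d) :
    (firstBlock d k).starProjection (EuclideanSpace.single i (1 : ℝ)) =
      if (i : ℕ) < d - k then EuclideanSpace.single i 1 else 0 := by
  split_ifs with hi
  · exact Submodule.starProjection_eq_self_iff.2 (Submodule.subset_span ⟨⟨i, hi⟩, rfl⟩)
  · refine (firstBlock d k).starProjection_apply_eq_zero_iff.2 <|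
      (Submodule.mem_orthogonal _ _).2 fun x hx ↦ ?_
    induction hx using Submodule.span_induction with
    | mem x hx =>
      obtain ⟨j, rfl⟩ := hx
      rw [EuclideanSpace.inner_single_left]
      simp [show j.1 ≠ i from fun h ↦ hi (h ▸ j.2)]
    | zero => exact inner_zero_left _
    | add x y _ _ hx hy => rw [inner_add_left, hx, hy, add_zero]
    | smul c x _ hx => rw [real_inner_smul_left, hx, mul_zero]

lemma starProjection_firstBlock_apply (x : Rd d) (i : Fin d) :
    (firstBlock d k).starProjection x i = if (i : ℕ) < d - k then x i else 0 := by
  have h := (firstBlock d k).inner_starProjection_left_eq_right (EuclideanSpace.single i (1 : ℝ)) x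
  rw [starProjection_firstBlock_single] at h
  split_ifs at h ⊢ with hi <;> simpa [EuclideanSpace.inner_single_left] using h.symm

lemma norm_sq_starProjection_firstBlock (x : Rd d) :
    ‖(firstBlock d k).starProjection x‖ ^ 2 = blockSq d k x := by
  simp [EuclideanSpace.real_norm_sq_eq, starProjection_firstBlock_apply, blockSq, ite_pow]

lemma gkSymmetric_eq_invariantUnder :
    GkSymmetric d k = InvariantUnder (splittingGroup (firstBlock d k)) := by
  ext u
  simp only [invariantUnder_splittingGroup_iff, GkSymmetric, ← norm_sq_starProjection_firstBlock,
    sq_eq_sq₀ (norm_nonneg _) (norm_nonneg _)]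

lemma radial_eq_gkSymmetric_self : (Radial : (Rd d → ℂ) → Prop) = GkSymmetric d d := by
  ext u
  simp [Radial, GkSymmetric, blockSq]

end CoordinateBlocks

end SplittingGroup

section Admissible

variable {s r : ℝ}

lemma one_add_rpow_two_mul_le (hs : 0 ≤ s) (hr : 0 ≤ r) :
    1 + r ^ (2 * s) ≤ 2 * (1 + r ^ 2) ^ s := by
  have hone : (1 : ℝ) ≤ (1 + r ^ 2) ^ s := one_le_rpow (by nlinarith) hs
  have hpow : r ^ (2 * s) ≤ (1 + r ^ 2) ^ s := by
    rw [rpow_mul hr, rpow_two]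
    gcongr
    linarith
  linarith

lemma one_add_sq_rpow_le (hs : 0 ≤ s) (hr : 0 ≤ r) :
    (1 + r ^ 2) ^ s ≤ 4 ^ s * (1 + r ^ (2 * s)) := by
  rw [rpow_mul hr, rpow_two]
  have hpow : 0 ≤ (r ^ 2) ^ s := by positivity
  rcases le_total (r ^ 2) 1 with hr1 | hr1
  · calc (1 + r ^ 2) ^ s ≤ 4 ^ s := by gcongr; linarith
      _ ≤ 4 ^ s * (1 + (r ^ 2) ^ s) := le_mul_of_one_le_right (by positivity) (by linarith)
  · calc (1 + r ^ 2) ^ s ≤ (4 * r ^ 2) ^ s := by gcongr; linarith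
      _ = 4 ^ s * (r ^ 2) ^ s := mul_rpow (by norm_num) (by positivity)
      _ ≤ 4 ^ s * (1 + (r ^ 2) ^ s) := by gcongr; linarith

variable {γ c C ε : ℝ} {g : ℝ → ℝ → ℝ}

lemma IsAdmissible.lower_bound (hg : IsAdmissible s γ c C g) (hs : 0 ≤ s) (hc : 0 < c)
    (hε : ε ∈ Set.Ioo (0 : ℝ) 1) (hr : 0 ≤ r) : c * ε / 4 ^ s * (1 + r ^ 2) ^ s ≤ g ε r := by
  obtain ⟨-, -, hfar, hnear⟩ := hg
  have hε0 : 0 < ε := hε.1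
  rw [div_mul_eq_mul_div, div_le_iff₀ (by positivity)]
  rcases le_total (1 / 2) |r - 1| with h | h
  · have hlow := (hfar ε hε r h).1
    rw [abs_of_nonneg hr] at hlow
    calc c * ε * (1 + r ^ 2) ^ s ≤ c * 1 * (4 ^ s * (1 + r ^ (2 * s))) := by
          gcongr
          exacts [hε.2.le, one_add_sq_rpow_le hs hr]
      _ = c * (1 + r ^ (2 * s)) * 4 ^ s := by ring
      _ ≤ g ε r * 4 ^ s := by gcongr
  · have hlow := (hnear ε hε r h).1
    have hr2 : 1 + r ^ 2 ≤ 4 := by nlinarith [(abs_le.1 h).2]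
    calc c * ε * (1 + r ^ 2) ^ s ≤ c * (ε + |r - 1| ^ γ) * 4 ^ s := by
          gcongr
          exact le_add_of_nonneg_right (by positivity)
      _ ≤ g ε r * 4 ^ s := by gcongr

lemma IsAdmissible.upper_bound (hg : IsAdmissible s γ c C g) (hs : 0 ≤ s) (hγ : 0 ≤ γ)
    (hC : 0 ≤ C) (hε : ε ∈ Set.Ioo (0 : ℝ) 1) (hr : 0 ≤ r) :
    g ε r ≤ 2 * C * (1 + r ^ 2) ^ s := by
  obtain ⟨-, -, hfar, hnear⟩ := hg
  rcases le_total (1 / 2) |r - 1| with h | h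
  · have hup := (hfar ε hε r h).2
    rw [abs_of_nonneg hr] at hup
    calc g ε r ≤ C * (1 + r ^ (2 * s)) := hup
      _ ≤ C * (2 * (1 + r ^ 2) ^ s) := by gcongr; exact one_add_rpow_two_mul_le hs hr
      _ = 2 * C * (1 + r ^ 2) ^ s := by ring
  · have hpow : |r - 1| ^ γ ≤ 1 := rpow_le_one (abs_nonneg _) (by linarith) hγ
    calc g ε r ≤ C * (ε + |r - 1| ^ γ) := (hnear ε hε r h).2
      _ ≤ C * (1 + 1) := by gcongr; exact hε.2.le
      _ = 2 * C * 1 := by ring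
      _ ≤ 2 * C * (1 + r ^ 2) ^ s := by gcongr; exact one_le_rpow (by nlinarith) hs

lemma IsAdmissible.isEllipticSymbol (hg : IsAdmissible s γ c C g) (hs : 0 < s) (hγ : 0 ≤ γ)
    (hc : 0 < c) (hC : 0 ≤ C) (hε : ε ∈ Set.Ioo (0 : ℝ) 1) : IsEllipticSymbol s (g ε) where
  order_pos := hs
  measurable := hg.1 ε hε
  lower := ⟨c * ε / 4 ^ s, div_pos (mul_pos hc hε.1) (by positivity),
    fun _ hr ↦ hg.lower_bound hs.le hc hε hr⟩
  upper := ⟨2 * C, fun _ hr ↦ hg.upper_bound hs.le hγ hC hε hr⟩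

end Admissible

section Existence

variable {d : ℕ} {s p : ℝ}

lemma mul_half_sub_inv_lt_of_subcritical (hp : 0 < p)
    (hps : s < (d : ℝ) / 2 → p < 2 * (d : ℝ) / ((d : ℝ) - 2 * s)) (hd : 0 < d) :
    (d : ℝ) * (1 / 2 - 1 / p) < s := by
  have : (0 : ℝ) < d := Nat.cast_pos.2 hd
  rcases lt_or_ge s ((d : ℝ) / 2) with h | h
  · have hlt := hps h
    rw [lt_div_iff₀ (by linarith)] at hlt
    calc (d : ℝ) * (1 / 2 - 1 / p) = (d * p - 2 * d) / (2 * p) := by field_simp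
      _ < s := by rw [div_lt_iff₀ (by linarith)]; linarith
  · calc (d : ℝ) * (1 / 2 - 1 / p) < d * (1 / 2) := by gcongr; exact sub_lt_self _ (by positivity)
      _ ≤ s := by linarith

variable {G : ℝ → ℝ}

lemma attained_gkSymmetric {k : ℕ} (hG : IsEllipticSymbol s G) (hp : 2 < p)
    (hsp : (d : ℝ) * (1 / 2 - 1 / p) < s) (hkd : k ≤ d) (hk1 : k ≠ 1) (hdk : d - k ≠ 1) :
    Attained d s p G (GkSymmetric d k) := by
  rw [gkSymmetric_eq_invariantUnder]
  refine attained_invariantUnder hG hp hsp (hasWideOrbits_splittingGroup ?_ ?_)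
  · rwa [finrank_firstBlock]
  · rwa [finrank_firstBlock_orthogonal hkd]

end Existence

theorem stmt12_general {d : ℕ} (hd : 2 ≤ d) {s p : ℝ} (hp : 2 < p)
    (hps : s < (d : ℝ) / 2 → p < 2 * (d : ℝ) / ((d : ℝ) - 2 * s))
    {G : ℝ → ℝ} (hG : IsEllipticSymbol s G) :
    (∀ k : ℕ, 2 ≤ k → k ≤ d - 2 → Attained d s p G (GkSymmetric d k)) ∧
    Attained d s p G Radial := by
  have hsp : (d : ℝ) * (1 / 2 - 1 / p) < s :=
    mul_half_sub_inv_lt_of_subcritical (by linarith) hps (by omega)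
  refine ⟨fun k hk hkd ↦ attained_gkSymmetric hG hp hsp (by omega) (by omega) (by omega), ?_⟩
  rw [radial_eq_gkSymmetric_self]
  exact attained_gkSymmetric hG hp hsp le_rfl (by omega) (by omega)

/-- Proposition A.1: existence of minimizers for `R^k_ε(p)`,
`k ∈ {2,…,d-2}`, and for `R^rad_ε(p)`, for any fixed `ε ∈ (0,1)`. -/
theorem stmt12 (d : ℕ) (hd : 2 ≤ d)
    (s γ p c C : ℝ)
    (hs : (d : ℝ) / ((d : ℝ) + 1) < s) (hγ : 1 < γ)
    (hp : 2 < p) (hps : s < (d : ℝ) / 2 → p < 2 * (d : ℝ) / ((d : ℝ) - 2 * s))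
    (hc : 0 < c) (hcC : c ≤ C)
    (g : ℝ → ℝ → ℝ) (hg : IsAdmissible s γ c C g)
    (ε : ℝ) (hε : ε ∈ Set.Ioo (0:ℝ) 1) :
    (∀ k : ℕ, 2 ≤ k → k ≤ d - 2 → Attained d s p (g ε) (GkSymmetric d k)) ∧
    Attained d s p (g ε) Radial :=
  stmt12_general hd hp hps <| hg.isEllipticSymbol (lt_of_le_of_lt (by positivity) hs)
    (by linarith) hc (by linarith) hε
end
end

section
/- Let 0 < r < q < ∞ and d ≥ 1. There is a constant K = K(r,q,d) < ∞ such that for all C₁, C₂ > 0 and every measurable function u : ℝ^d → ℂ with ‖u‖_{L^r(ℝ^d)} ≤ C₁ and |u(x)| ≤ C₂(1+|x|)^{−d/q} for almost every x ∈ ℝ^d, one has ‖u‖_{L^q(ℝ^d)} ≤ K · C₂ · (1 + log₊(C₁/C₂))^{1/q}, where log₊ t := max(log t, 0). -/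
open MeasureTheory Real Filter
open scoped ENNReal FourierTransform RealInnerProductSpace Topology

noncomputable section

/-!
The weight `g x = (1 + ‖x‖) ^ (-d / q)` is at most `1` and lies in weak `L^q`, so `∫ g ^ q` over
each dyadic layer `{t < g ≤ 2 t}` is bounded independently of `t`. Split the integral of `‖u‖ ^ q`
at the level `g = 2 ^ (-N)`. Above it there are `N` layers, on which `‖u‖ ≤ C₂ g` contributes
`O(N C₂ ^ q)`. Below it `‖u‖ ≤ C₂ 2 ^ (-N)`, so that
`∫ ‖u‖ ^ q ≤ (C₂ 2 ^ (-N)) ^ (q - r) C₁ ^ r`, which is at most `C₂ ^ q` as soon as `N` exceeds a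
constant multiple of `log⁺ (C₁ / C₂)`.
-/

section Real

variable {r q : ℝ}

theorem rpow_sub_mul_rpow_le_rpow_of_mul_posLog_le {C₁ C₂ : ℝ} (hC₁ : 0 < C₁) (hC₂ : 0 < C₂)
    (hr : 0 ≤ r) {N : ℕ} (hN : r * log⁺ (C₁ / C₂) ≤ (q - r) * (N * log 2)) :
    (C₂ * (2 ^ N)⁻¹) ^ (q - r) * C₁ ^ r ≤ C₂ ^ q := by
  have hlog : r * (log C₁ - log C₂) ≤ r * log⁺ (C₁ / C₂) := by
    rw [← log_div hC₁.ne' hC₂.ne', posLog_apply]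
    exact mul_le_mul_of_nonneg_left (le_max_right _ _) hr
  rw [← log_le_log_iff (by positivity) (by positivity), log_mul (by positivity) (by positivity),
    log_rpow (by positivity), log_mul (by positivity) (by positivity), log_inv, log_pow,
    log_rpow hC₁, log_rpow hC₂]
  linarith

theorem exists_nat_le_and_mul_posLog_le (hr : 0 ≤ r) (hrq : r < q) (x : ℝ) :
    ∃ N : ℕ, (N : ℝ) ≤ r / ((q - r) * log 2) * log⁺ x + 1 ∧
      r * log⁺ x ≤ (q - r) * (N * log 2) := by
  have hqr : 0 < q - r := sub_pos.2 hrq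
  have hpos : 0 ≤ log⁺ x := posLog_nonneg
  refine ⟨⌈r / ((q - r) * log 2) * log⁺ x⌉₊, (Nat.ceil_lt_add_one (by positivity)).le, ?_⟩
  calc r * log⁺ x = (q - r) * (r / ((q - r) * log 2) * log⁺ x * log 2) := by field_simp
    _ ≤ (q - r) * (⌈r / ((q - r) * log 2) * log⁺ x⌉₊ * log 2) := by
        gcongr
        exact Nat.le_ceil _

end Real

section MeasureSpace

variable {α : Type*} [MeasurableSpace α] {μ : Measure α} {r q : ℝ}

theorem eLpNorm_ofReal_le_ofReal_iff {ε : Type*} [ENorm ε] {u : α → ε} {p C : ℝ} (hp : 0 < p)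
    (hC : 0 ≤ C) :
    eLpNorm u (ENNReal.ofReal p) μ ≤ ENNReal.ofReal C ↔
      ∫⁻ x, ‖u x‖ₑ ^ p ∂μ ≤ ENNReal.ofReal (C ^ p) := by
  rw [eLpNorm_eq_lintegral_rpow_enorm_toReal (by simpa using hp) ENNReal.ofReal_ne_top,
    ENNReal.toReal_ofReal hp.le, one_div, ENNReal.rpow_inv_le_iff hp,
    ENNReal.ofReal_rpow_of_nonneg hC hp.le]

theorem lintegral_rpow_le_rpow_sub_mul_lintegral_rpow {f : α → ℝ≥0∞} {c : ℝ≥0∞} (hc : c ≠ ∞)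
    (hr : 0 ≤ r) (hrq : r ≤ q) (hf : ∀ᵐ x ∂μ, f x ≤ c) :
    ∫⁻ x, f x ^ q ∂μ ≤ c ^ (q - r) * ∫⁻ x, f x ^ r ∂μ := by
  have hqr : 0 ≤ q - r := sub_nonneg.2 hrq
  rw [← lintegral_const_mul' _ _ (ENNReal.rpow_ne_top_of_nonneg hqr hc)]
  refine lintegral_mono_ae ?_
  filter_upwards [hf] with x hx
  calc f x ^ q = f x ^ (q - r) * f x ^ r := by
        rw [← ENNReal.rpow_add_of_nonneg _ _ hqr hr, sub_add_cancel]
    _ ≤ c ^ (q - r) * f x ^ r := by gcongr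

/-- The weak-`L^q` quasinorm of `g` is at most `V ^ (1 / q)`. The inequality is not solved for the
measure, so that the levels `t = 0` and `t = ∞` impose no condition when `0 < q`. -/
def HasWeakLpBound (g : α → ℝ≥0∞) (q : ℝ) (V : ℝ≥0∞) (μ : Measure α) : Prop :=
  ∀ t : ℝ≥0∞, t ^ q * μ {x | t < g x} ≤ V

namespace HasWeakLpBound

variable {g : α → ℝ≥0∞} {V : ℝ≥0∞}

theorem setLIntegral_rpow_Ioc_le (hg : HasWeakLpBound g q V μ) (hgm : Measurable g) (hq : 0 ≤ q)
    (t : ℝ≥0∞) : ∫⁻ x in g ⁻¹' Set.Ioc t (2 * t), g x ^ q ∂μ ≤ 2 ^ q * V := by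
  calc ∫⁻ x in g ⁻¹' Set.Ioc t (2 * t), g x ^ q ∂μ
      ≤ ∫⁻ _ in g ⁻¹' Set.Ioc t (2 * t), (2 * t) ^ q ∂μ :=
        setLIntegral_mono' (hgm measurableSet_Ioc) fun x hx => ENNReal.rpow_le_rpow hx.2 hq
    _ = 2 ^ q * (t ^ q * μ (g ⁻¹' Set.Ioc t (2 * t))) := by
        rw [setLIntegral_const, ENNReal.mul_rpow_of_nonneg _ _ hq, mul_assoc]
    _ ≤ 2 ^ q * (t ^ q * μ {x | t < g x}) := by
        gcongr
        exact fun x hx => hx.1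
    _ ≤ 2 ^ q * V := by
        gcongr
        exact hg t

theorem setLIntegral_rpow_Ioc_two_pow_le (hg : HasWeakLpBound g q V μ) (hgm : Measurable g)
    (hq : 0 ≤ q) (t : ℝ≥0∞) (N : ℕ) :
    ∫⁻ x in g ⁻¹' Set.Ioc t (2 ^ N * t), g x ^ q ∂μ ≤ N * (2 ^ q * V) := by
  induction N with
  | zero => simp
  | succ N ih =>
    have hsplit : g ⁻¹' Set.Ioc t (2 ^ (N + 1) * t) ⊆
        g ⁻¹' Set.Ioc t (2 ^ N * t) ∪ g ⁻¹' Set.Ioc (2 ^ N * t) (2 * (2 ^ N * t)) := by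
      rw [← Set.preimage_union, ← mul_assoc 2, ← pow_succ']
      exact Set.preimage_mono Set.Ioc_subset_Ioc_union_Ioc
    calc ∫⁻ x in g ⁻¹' Set.Ioc t (2 ^ (N + 1) * t), g x ^ q ∂μ
        ≤ ∫⁻ x in g ⁻¹' Set.Ioc t (2 ^ N * t), g x ^ q ∂μ +
            ∫⁻ x in g ⁻¹' Set.Ioc (2 ^ N * t) (2 * (2 ^ N * t)), g x ^ q ∂μ :=
          (lintegral_mono_set hsplit).trans (lintegral_union_le _ _ _)
      _ ≤ N * (2 ^ q * V) + 2 ^ q * V :=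
          add_le_add ih (hg.setLIntegral_rpow_Ioc_le hgm hq _)
      _ = (N + 1 : ℕ) * (2 ^ q * V) := by
          push_cast
          ring

theorem setLIntegral_rpow_inv_two_pow_lt_le (hg : HasWeakLpBound g q V μ) (hgm : Measurable g)
    (hg1 : ∀ x, g x ≤ 1) (hq : 0 ≤ q) (N : ℕ) :
    ∫⁻ x in {x | (2 ^ N)⁻¹ < g x}, g x ^ q ∂μ ≤ N * (2 ^ q * V) := by
  have hlayers : {x | (2 ^ N)⁻¹ < g x} = g ⁻¹' Set.Ioc (2 ^ N)⁻¹ (2 ^ N * (2 ^ N)⁻¹) := by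
    rw [ENNReal.mul_inv_cancel (by simp) (by simp)]
    ext x
    simp [hg1 x]
  rw [hlayers]
  exact hg.setLIntegral_rpow_Ioc_two_pow_le hgm hq _ N

theorem lintegral_rpow_le_add (hg : HasWeakLpBound g q V μ) (hgm : Measurable g)
    (hg1 : ∀ x, g x ≤ 1) (hr : 0 ≤ r) (hrq : r ≤ q) {f : α → ℝ≥0∞} {c : ℝ≥0∞} (hc : c ≠ ∞)
    (hf : ∀ᵐ x ∂μ, f x ≤ c * g x) (N : ℕ) :
    ∫⁻ x, f x ^ q ∂μ ≤
      c ^ q * (N * (2 ^ q * V)) + (c * (2 ^ N)⁻¹) ^ (q - r) * ∫⁻ x, f x ^ r ∂μ := by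
  have hq : 0 ≤ q := hr.trans hrq
  set S : Set α := {x | (2 ^ N)⁻¹ < g x}
  have hS : MeasurableSet S := measurableSet_lt measurable_const hgm
  have hhigh : ∫⁻ x in S, f x ^ q ∂μ ≤ c ^ q * (N * (2 ^ q * V)) := by
    calc ∫⁻ x in S, f x ^ q ∂μ ≤ ∫⁻ x in S, c ^ q * g x ^ q ∂μ := by
          refine lintegral_mono_ae (ae_restrict_of_ae ?_)
          filter_upwards [hf] with x hx
          rw [← ENNReal.mul_rpow_of_nonneg _ _ hq]
          gcongr
      _ = c ^ q * ∫⁻ x in S, g x ^ q ∂μ :=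
          lintegral_const_mul' _ _ (ENNReal.rpow_ne_top_of_nonneg hq hc)
      _ ≤ c ^ q * (N * (2 ^ q * V)) := by
          gcongr
          exact hg.setLIntegral_rpow_inv_two_pow_lt_le hgm hg1 hq N
  have hlow : ∫⁻ x in Sᶜ, f x ^ q ∂μ ≤
      (c * (2 ^ N)⁻¹) ^ (q - r) * ∫⁻ x in Sᶜ, f x ^ r ∂μ := by
    refine lintegral_rpow_le_rpow_sub_mul_lintegral_rpow (ENNReal.mul_ne_top hc (by simp)) hr hrq ?_
    filter_upwards [ae_restrict_of_ae hf, ae_restrict_mem hS.compl] with x hx hxS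
    have hgx : g x ≤ (2 ^ N)⁻¹ := by simpa [S] using hxS
    exact hx.trans (by gcongr)
  rw [← lintegral_add_compl _ hS]
  grw [hhigh, hlow, setLIntegral_le_lintegral Sᶜ]

theorem lintegral_rpow_le_of_mul_posLog_le {V : NNReal} (hg : HasWeakLpBound g q V μ)
    (hgm : Measurable g) (hg1 : ∀ x, g x ≤ 1) (hr : 0 ≤ r) (hrq : r ≤ q) {C₁ C₂ : ℝ}
    (hC₁ : 0 < C₁) (hC₂ : 0 < C₂) {f : α → ℝ≥0∞}
    (hfr : ∫⁻ x, f x ^ r ∂μ ≤ ENNReal.ofReal (C₁ ^ r))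
    (hf : ∀ᵐ x ∂μ, f x ≤ ENNReal.ofReal C₂ * g x) {N : ℕ}
    (hN : r * log⁺ (C₁ / C₂) ≤ (q - r) * (N * log 2)) :
    ∫⁻ x, f x ^ q ∂μ ≤ ENNReal.ofReal (C₂ ^ q * (N * (2 ^ q * V) + 1)) := by
  have hofReal :
      ENNReal.ofReal (C₂ ^ q * (N * (2 ^ q * V)) + (C₂ * (2 ^ N)⁻¹) ^ (q - r) * C₁ ^ r) =
        ENNReal.ofReal C₂ ^ q * (N * (2 ^ q * V)) +
          (ENNReal.ofReal C₂ * (2 ^ N)⁻¹) ^ (q - r) * ENNReal.ofReal (C₁ ^ r) := by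
    simp (disch := positivity) only [ENNReal.ofReal_add, ENNReal.ofReal_mul,
      ← ENNReal.ofReal_rpow_of_pos, ENNReal.ofReal_inv_of_pos, ENNReal.ofReal_pow,
      ENNReal.ofReal_natCast, ENNReal.ofReal_ofNat, ENNReal.ofReal_coe_nnreal]
  calc ∫⁻ x, f x ^ q ∂μ
      ≤ ENNReal.ofReal (C₂ ^ q * (N * (2 ^ q * V)) + (C₂ * (2 ^ N)⁻¹) ^ (q - r) * C₁ ^ r) := by
        rw [hofReal]
        grw [hg.lintegral_rpow_le_add hgm hg1 hr hrq ENNReal.ofReal_ne_top hf N, hfr]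
    _ ≤ ENNReal.ofReal (C₂ ^ q * (N * (2 ^ q * V) + 1)) := by
        grw [rpow_sub_mul_rpow_le_rpow_of_mul_posLog_le hC₁ hC₂ hr hN, mul_add_one]

theorem exists_lintegral_rpow_le_mul_posLog (hg : HasWeakLpBound g q V μ) (hV : V ≠ ∞)
    (hgm : Measurable g) (hg1 : ∀ x, g x ≤ 1) (hr : 0 ≤ r) (hrq : r < q) :
    ∃ K : ℝ, 0 < K ∧ ∀ C₁ C₂ : ℝ, 0 < C₁ → 0 < C₂ → ∀ f : α → ℝ≥0∞,
      ∫⁻ x, f x ^ r ∂μ ≤ ENNReal.ofReal (C₁ ^ r) →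
      (∀ᵐ x ∂μ, f x ≤ ENNReal.ofReal C₂ * g x) →
      ∫⁻ x, f x ^ q ∂μ ≤ ENNReal.ofReal (K * C₂ ^ q * (1 + log⁺ (C₁ / C₂))) := by
  lift V to NNReal using hV
  set A : ℝ := r / ((q - r) * log 2)
  set M : ℝ := 2 ^ q * V
  have hA : 0 ≤ A := div_nonneg hr (mul_nonneg (sub_nonneg.2 hrq.le) (log_nonneg one_le_two))
  have hM : 0 ≤ M := by positivity
  refine ⟨(A + 1) * M + 1, by positivity, fun C₁ C₂ hC₁ hC₂ f hfr hf => ?_⟩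
  obtain ⟨N, hNle, hN⟩ := exists_nat_le_and_mul_posLog_le hr hrq (C₁ / C₂)
  set L : ℝ := log⁺ (C₁ / C₂)
  have hL : 0 ≤ L := posLog_nonneg
  have hcount : N * M + 1 ≤ ((A + 1) * M + 1) * (1 + L) := by
    have hlayers : N * M ≤ (A * L + 1) * M := by gcongr
    have hslack : 0 ≤ A * M + M * L + L := by positivity
    linarith
  calc ∫⁻ x, f x ^ q ∂μ ≤ ENNReal.ofReal (C₂ ^ q * (N * M + 1)) :=
        hg.lintegral_rpow_le_of_mul_posLog_le hgm hg1 hr hrq.le hC₁ hC₂ hfr hf hN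
    _ ≤ ENNReal.ofReal (C₂ ^ q * (((A + 1) * M + 1) * (1 + L))) := by grw [hcount]
    _ = ENNReal.ofReal (((A + 1) * M + 1) * C₂ ^ q * (1 + L)) := by ring_nf

theorem exists_eLpNorm_le_mul_posLog {ε : Type*} [ENorm ε] (hg : HasWeakLpBound g q V μ)
    (hV : V ≠ ∞) (hgm : Measurable g) (hg1 : ∀ x, g x ≤ 1) (hr : 0 < r) (hrq : r < q) :
    ∃ K : ℝ, 0 < K ∧ ∀ C₁ C₂ : ℝ, 0 < C₁ → 0 < C₂ → ∀ u : α → ε,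
      eLpNorm u (ENNReal.ofReal r) μ ≤ ENNReal.ofReal C₁ →
      (∀ᵐ x ∂μ, ‖u x‖ₑ ≤ ENNReal.ofReal C₂ * g x) →
      eLpNorm u (ENNReal.ofReal q) μ ≤
        ENNReal.ofReal (K * C₂ * (1 + log⁺ (C₁ / C₂)) ^ (1 / q)) := by
  have hq : 0 < q := hr.trans hrq
  obtain ⟨K, hK, hbound⟩ := hg.exists_lintegral_rpow_le_mul_posLog hV hgm hg1 hr.le hrq
  refine ⟨K ^ (1 / q), by positivity, fun C₁ C₂ hC₁ hC₂ u hur hu => ?_⟩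
  have hL : 0 ≤ 1 + log⁺ (C₁ / C₂) := add_nonneg zero_le_one posLog_nonneg
  have hroot : (K ^ (1 / q) * C₂ * (1 + log⁺ (C₁ / C₂)) ^ (1 / q)) ^ q =
      K * C₂ ^ q * (1 + log⁺ (C₁ / C₂)) := by
    rw [mul_rpow (by positivity) (by positivity), mul_rpow (by positivity) hC₂.le,
      one_div, rpow_inv_rpow hK.le hq.ne', rpow_inv_rpow hL hq.ne']
  rw [eLpNorm_ofReal_le_ofReal_iff hr hC₁.le] at hur
  rw [eLpNorm_ofReal_le_ofReal_iff hq (by positivity), hroot]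
  exact hbound C₁ C₂ hC₁ hC₂ (‖u ·‖ₑ) hur hu

end HasWeakLpBound

end MeasureSpace

section NormedSpace

open Module

theorem ofReal_one_add_norm_rpow_neg_le_one {E : Type*} [SeminormedAddCommGroup E] {s : ℝ}
    (hs : 0 ≤ s) (x : E) : ENNReal.ofReal ((1 + ‖x‖) ^ (-s)) ≤ 1 :=
  ENNReal.ofReal_le_one.2 <|
    rpow_le_one_of_one_le_of_nonpos (le_add_of_nonneg_right (norm_nonneg x)) (neg_nonpos.2 hs)

theorem setOf_lt_one_add_norm_rpow_subset_ball {E : Type*} [SeminormedAddCommGroup E] {s t : ℝ}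
    (hs : 0 < s) (ht : 0 < t) : {x : E | t < (1 + ‖x‖) ^ (-s)} ⊆ Metric.ball 0 (t ^ (-s⁻¹)) := by
  intro x (hx : t < (1 + ‖x‖) ^ (-s))
  have hlt : 1 + ‖x‖ < t ^ (-s⁻¹) := by
    rwa [← lt_rpow_inv_iff_of_neg ht (by positivity) (neg_neg_of_pos (inv_pos.2 hs)), inv_neg,
      inv_inv]
  rw [mem_ball_zero_iff]
  linarith

variable {E : Type*} [NormedAddCommGroup E] [NormedSpace ℝ E] [FiniteDimensional ℝ E]
  [MeasurableSpace E] [BorelSpace E] (μ : Measure E) [μ.IsAddHaarMeasure] {r q : ℝ}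

theorem ofReal_rpow_mul_addHaar_lt_one_add_norm_rpow_le [Nontrivial E] (hq : 0 < q) {t : ℝ}
    (ht : 0 < t) :
    ENNReal.ofReal t ^ q * μ {x : E | t < (1 + ‖x‖) ^ (-((finrank ℝ E : ℝ) / q))} ≤
      μ (Metric.ball 0 1) := by
  have hdim : (0 : ℝ) < finrank ℝ E := mod_cast finrank_pos
  have hscale : t ^ q * (t ^ (-((finrank ℝ E : ℝ) / q)⁻¹)) ^ finrank ℝ E = 1 := by
    rw [← rpow_natCast, ← rpow_mul ht.le, ← rpow_add ht, inv_div, neg_mul,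
      div_mul_cancel₀ _ hdim.ne', add_neg_cancel, rpow_zero]
  calc ENNReal.ofReal t ^ q * μ {x : E | t < (1 + ‖x‖) ^ (-((finrank ℝ E : ℝ) / q))}
      ≤ ENNReal.ofReal t ^ q * μ (Metric.ball 0 (t ^ (-((finrank ℝ E : ℝ) / q)⁻¹))) := by
        gcongr
        exact setOf_lt_one_add_norm_rpow_subset_ball (by positivity) ht
    _ = μ (Metric.ball 0 1) := by
        rw [Measure.addHaar_ball_of_pos _ _ (by positivity), ENNReal.ofReal_rpow_of_pos ht,
          ← mul_assoc, ← ENNReal.ofReal_mul (by positivity), hscale, ENNReal.ofReal_one, one_mul]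

theorem hasWeakLpBound_one_add_norm_rpow (hq : 0 < q) :
    HasWeakLpBound (fun x : E => ENNReal.ofReal ((1 + ‖x‖) ^ (-((finrank ℝ E : ℝ) / q)))) q
      (μ (Metric.ball 0 1)) μ := by
  intro t
  obtain rfl | ht0 := eq_or_ne t 0
  · simp [ENNReal.zero_rpow_of_pos hq]
  obtain ht1 | ht1 := le_or_gt 1 t
  · have hle (x : E) : ENNReal.ofReal ((1 + ‖x‖) ^ (-((finrank ℝ E : ℝ) / q))) ≤ t :=
      (ofReal_one_add_norm_rpow_neg_le_one (by positivity) x).trans ht1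
    simp [(hle _).not_gt]
  obtain hE | hE := subsingleton_or_nontrivial E
  · have hball : Metric.ball (0 : E) 1 = Set.univ :=
      Set.eq_univ_of_forall fun x => by simp [Subsingleton.elim x 0]
    grw [hball, ENNReal.rpow_le_one ht1.le hq.le, one_mul]
    exact measure_mono (Set.subset_univ _)
  · have ht : t ≠ ∞ := (ht1.trans ENNReal.one_lt_top).ne
    simp only [ENNReal.lt_ofReal_iff_toReal_lt ht]
    rw [← ENNReal.ofReal_toReal ht, ENNReal.toReal_ofReal ENNReal.toReal_nonneg]
    exact ofReal_rpow_mul_addHaar_lt_one_add_norm_rpow_le μ hq (ENNReal.toReal_pos ht0 ht)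

theorem stmt13_general (F : Type*) [NormedAddCommGroup F] (hr : 0 < r) (hrq : r < q) :
    ∃ K : ℝ, 0 < K ∧ ∀ C₁ C₂ : ℝ, 0 < C₁ → 0 < C₂ → ∀ u : E → F,
      eLpNorm u (ENNReal.ofReal r) μ ≤ ENNReal.ofReal C₁ →
      (∀ᵐ x ∂μ, ‖u x‖ ≤ C₂ * (1 + ‖x‖) ^ (-((finrank ℝ E : ℝ) / q))) →
      eLpNorm u (ENNReal.ofReal q) μ ≤
        ENNReal.ofReal (K * C₂ * (1 + log⁺ (C₁ / C₂)) ^ (1 / q)) := by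
  have hq : 0 < q := hr.trans hrq
  obtain ⟨K, hK, hbound⟩ := (hasWeakLpBound_one_add_norm_rpow μ hq).exists_eLpNorm_le_mul_posLog
    (ε := F) measure_ball_lt_top.ne (by fun_prop)
    (ofReal_one_add_norm_rpow_neg_le_one (by positivity)) hr hrq
  refine ⟨K, hK, fun C₁ C₂ hC₁ hC₂ u hur hu => hbound C₁ C₂ hC₁ hC₂ u hur ?_⟩
  filter_upwards [hu] with x hx
  rw [← ENNReal.ofReal_mul hC₂.le, ← ofReal_norm]
  exact ENNReal.ofReal_le_ofReal hx

end NormedSpace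

/-- Proposition B.1: the real interpolation bound
`‖u‖_q ≲ C₂ (1 + log₊(C₁/C₂))^{1/q}` for functions with `‖u‖_r ≤ C₁` and the
pointwise decay `|u(x)| ≤ C₂(1+|x|)^{-d/q}`. -/
theorem stmt13 (d : ℕ) (hd : 1 ≤ d) (r q : ℝ) (hr : 0 < r) (hrq : r < q) :
    ∃ K : ℝ, 0 < K ∧
      ∀ C₁ C₂ : ℝ, 0 < C₁ → 0 < C₂ →
        ∀ u : Rd d → ℂ, Measurable u →
          eLpNorm u (ENNReal.ofReal r) volume ≤ ENNReal.ofReal C₁ →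
          (∀ᵐ x : Rd d, ‖u x‖ ≤ C₂ * (1 + ‖x‖) ^ (-((d : ℝ) / q))) →
          eLpNorm u (ENNReal.ofReal q) volume
            ≤ ENNReal.ofReal (K * C₂ * (1 + max (Real.log (C₁ / C₂)) 0) ^ (1/q)) := by
  obtain ⟨K, hK, hbound⟩ := stmt13_general (volume : Measure (Rd d)) ℂ hr hrq
  refine ⟨K, hK, fun C₁ C₂ hC₁ hC₂ u _ hur hu => ?_⟩
  simpa only [posLog_apply, max_comm] using
    hbound C₁ C₂ hC₁ hC₂ u hur (by simpa only [finrank_euclideanSpace_fin] using hu)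
end
end
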